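/- Let g be the simple complex Lie algebra of type F₄. Then there exists an sl₂-triple (e,h,f) in g such that the centralizer g_e has dimension 16, its derived subalgebra [g_e, g_e] has dimension 15, and e ∉ [g_e, g_e]; consequently g_e is the direct sum of the span of e and [g_e, g_e]. -/

import Mathlib

namespace PaperStmt

open LieAlgebra Module

variable (R : Type*) {L : Type*} [CommRing R] [LieRing L] [LieAlgebra R L]

/-- The centralizer `g_x = {y ∈ g | ⁅y, x⁆ = 0}` of an element of a Lie algebra,
as a Lie subalgebra. -/
def centralizerOf (x : L) : LieSubalgebra R L where
  carrier := {y : L | ⁅y, x⁆ = 0}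
  add_mem' := fun {a b} (ha : ⁅a, x⁆ = 0) (hb : ⁅b, x⁆ = 0) => by
    show ⁅a + b, x⁆ = 0
    rw [add_lie, ha, hb, add_zero]
  zero_mem' := zero_lie x
  smul_mem' := fun c a (ha : ⁅a, x⁆ = 0) => by
    show ⁅c • a, x⁆ = 0
    rw [smul_lie, ha, smul_zero]
  lie_mem' := fun {a b} (ha : ⁅a, x⁆ = 0) (hb : ⁅b, x⁆ = 0) => by
    show ⁅⁅a, b⁆, x⁆ = 0
    rw [lie_lie, ha, hb, lie_zero, lie_zero, sub_zero]

/-- The subspace spanned by the brackets `⁅x, y⁆` with `x ∈ A`, `y ∈ B`. -/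
def bracketSpan (A B : Submodule R L) : Submodule R L :=
  Submodule.span R {z : L | ∃ x ∈ A, ∃ y ∈ B, z = ⁅x, y⁆}

/-- The derived subalgebra `[k, k]` of a Lie subalgebra `k`, as a subspace of the
ambient Lie algebra: the span of all brackets `⁅a, b⁆` with `a, b ∈ k`. -/
def derivedOf (K : LieSubalgebra R L) : Submodule R L :=
  bracketSpan R K.toSubmodule K.toSubmodule

/-- An element `e` of a Lie algebra is reachable if `e ∈ [g_e, g_e]`. -/
def IsReachable (e : L) : Prop :=
  e ∈ derivedOf R (centralizerOf R e)

/-- `g(k)`, the `k`-eigenspace of `ad h`. -/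
def gradePiece (h : L) (k : ℤ) : Submodule R L :=
  Module.End.eigenspace (LieAlgebra.ad R L h) (k : R)

/-- `g(k)_e = g(k) ∩ g_e`. -/
def gradePieceCent (e h : L) (k : ℤ) : Submodule R L :=
  gradePiece R h k ⊓ (centralizerOf R e).toSubmodule

/-- `g(≥1)_e`, the sum of the subspaces `g(k)_e` over all `k ≥ 1`. -/
def gradeGeOneCent (e h : L) : Submodule R L :=
  ⨆ k ∈ {k : ℤ | 1 ≤ k}, gradePieceCent R e h k

/-!
Take `e = E₀ + E₁ + E₃`, the regular nilpotent element of a Levi subalgebra of type `Ã₂ + A₁`, with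
its standard `sl₂`-triple.

To compute in the algebra defined by the Serre relations one needs a basis. In the adjoint
representation, Lusztig and Geck found a basis on which the Chevalley generators act by monomial
matrices with explicit nonnegative entries. These matrices satisfy the Serre relations, so the
generators `Eᵢ` do not vanish. Conversely, vectors with the same structure constants are
constructed in every Lie algebra with Chevalley generators: they come from the Cartan subalgebra by
raising, and the action of the `Eᵢ` is determined inductively, since a vector of positive
`Hⱼ`-weight annihilated by `Fⱼ` vanishes if `ad Eⱼ` is locally nilpotent. In the Serre algebra they
form a basis.

By `sl₂`-theory `ad e` is injective on negative weights and surjective onto positive weights,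
so `dim g_e` is at most the number of basis vectors of weight `0` or `1`, which is `16`. Sixteen
independent vectors are exhibited in `g_e`; fifteen of them are brackets, most of them because they
are eigenvectors of a semisimple element of `g_e`.

Finally `⁅F₀, g_e⁆ ⊆ ⁅e, g⁆`, so by invariance the Killing form pairs `F₀` to zero with
`[g_e, g_e]`: `κ(F₀, ⁅a, b⁆) = κ(⁅F₀, a⁆, b) = κ(⁅e, w⁆, b) = -κ(w, ⁅e, b⁆) = 0`. But
`κ(F₀, e) = 36`, whence `e ∉ [g_e, g_e]`.
-/

section Sl2

open LieModule

variable {K 𝔤 V : Type*} [Field K] [CharZero K] [LieRing 𝔤] [LieAlgebra K 𝔤]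
  [AddCommGroup V] [Module K V] [LieRingModule 𝔤 V] [LieModule K 𝔤 V] {h e f : 𝔤}

lemma eq_zero_of_lie_f_eq_zero_of_weight_pos (t : IsSl2Triple h e f) {v : V} {n : ℤ} (hn : 0 < n)
    (hv : ⁅h, v⁆ = n • v) (hfv : ⁅f, v⁆ = 0) (hev : ∃ k, (toEnd K 𝔤 V e ^ k) v = 0) : v = 0 := by
  by_contra hv0
  have P : t.symm.HasPrimitiveVectorWith v (-n : K) :=
    ⟨hv0, by rw [neg_lie, hv, neg_smul, Int.cast_smul_eq_zsmul], hfv⟩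
  obtain ⟨k, hk, hk'⟩ := Nat.exists_not_and_succ_of_not_zero_of_exists
    (p := fun k ↦ (toEnd K 𝔤 V e ^ k) v = 0) hv0 hev
  have hcoeff := P.lie_e_pow_succ_toEnd_f k
  rw [hk', lie_zero, eq_comm, smul_eq_zero_iff_left hk] at hcoeff
  have : (k + 1 : ℤ) * (-n - k) = 0 := by exact_mod_cast hcoeff
  nlinarith

lemma eq_zero_of_lie_e_eq_zero_of_weight_neg (t : IsSl2Triple h e f) {v : V} {n : ℤ} (hn : n < 0)
    (hv : ⁅h, v⁆ = n • v) (hev : ⁅e, v⁆ = 0) (hfv : ∃ k, (toEnd K 𝔤 V f ^ k) v = 0) : v = 0 :=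
  eq_zero_of_lie_f_eq_zero_of_weight_pos t.symm (n := -n) (by omega)
    (by rw [neg_lie, hv, neg_smul]) hev hfv

lemma exists_e_pow_f_pow_eq_smul (t : IsSl2Triple h e f) {w : V} {m : ℤ}
    (P : t.HasPrimitiveVectorWith w (m : K)) {k : ℕ} (hk : k ≤ m) :
    ∃ c : K, c ≠ 0 ∧ (toEnd K 𝔤 V e ^ k) ((toEnd K 𝔤 V f ^ k) w) = c • w := by
  induction k with
  | zero => exact ⟨1, one_ne_zero, by simp⟩
  | succ k ih =>
    obtain ⟨c, hc, hcw⟩ := ih (by omega)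
    have hcoeff : ((k + 1) * (m - k) : K) ≠ 0 := by
      have : (k + 1 : ℤ) * (m - k) ≠ 0 := (mul_pos (by omega) (by push_cast at hk; omega)).ne'
      exact_mod_cast this
    refine ⟨_, mul_ne_zero hcoeff hc, ?_⟩
    rw [pow_succ (toEnd K 𝔤 V e), Module.End.mul_apply, toEnd_apply_apply,
      P.lie_e_pow_succ_toEnd_f, map_smul, hcw, smul_smul]

/-- Subtracting from `v` a multiple of `e fⁿ⁺¹ eⁿ v` lowers the order of nilpotency of `e` on it. -/
lemma mem_range_e_of_weight_pos (t : IsSl2Triple h e f) {n : ℕ} {v : V} {m : ℤ} (hm : 0 < m)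
    (hv : ⁅h, v⁆ = (m : K) • v) (hev : (toEnd K 𝔤 V e ^ n) v = 0) :
    v ∈ LinearMap.range (toEnd K 𝔤 V e) := by
  induction n generalizing v with
  | zero => rw [show v = 0 from hev]; exact zero_mem _
  | succ n ih =>
    by_cases hw0 : (toEnd K 𝔤 V e ^ n) v = 0
    · exact ih hv hw0
    set w := (toEnd K 𝔤 V e ^ n) v with hw
    have P : t.HasPrimitiveVectorWith w ((m + 2 * n : ℤ) : K) :=
      ⟨hw0, by rw [t.lie_h_pow_toEnd_e hv]; norm_cast,
        by rwa [pow_succ', Module.End.mul_apply, toEnd_apply_apply] at hev⟩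
    obtain ⟨c, hc, hcw⟩ := exists_e_pow_f_pow_eq_smul t P (k := n + 1) (by push_cast; omega)
    set u := c⁻¹ • (toEnd K 𝔤 V f ^ (n + 1)) w with hu
    have hhu : ⁅h, u⁆ = (m - 2 : K) • u := by
      rw [hu, lie_smul, P.lie_h_pow_toEnd_f, smul_comm c⁻¹]
      congr 1
      push_cast
      ring
    have hheu : ⁅h, ⁅e, u⁆⁆ = (m : K) • ⁅e, u⁆ := by
      simpa using t.lie_h_pow_toEnd_e hhu 1
    have hdiff : v - ⁅e, u⁆ ∈ LinearMap.range (toEnd K 𝔤 V e) := by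
      refine ih (by rw [lie_sub, hv, hheu, smul_sub]) ?_
      rw [map_sub, ← hw, ← toEnd_apply_apply K 𝔤 V e u, ← Module.End.mul_apply, ← pow_succ, hu,
        map_smul, hcw, inv_smul_smul₀ hc, sub_self]
    simpa using add_mem hdiff (LinearMap.mem_range_self (toEnd K 𝔤 V e) u)

lemma exists_pow_e_eq_zero [FiniteDimensional K V] (t : IsSl2Triple h e f) {v : V} {μ : K}
    (hv : ⁅h, v⁆ = μ • v) : ∃ n, (toEnd K 𝔤 V e ^ n) v = 0 := by
  by_contra! hne
  have hinj : Function.Injective fun n : ℕ ↦ μ + 2 * n := fun a b hab ↦ by simpa using hab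
  exact not_finite_iff_infinite.2 inferInstance <| LinearIndependent.finite <|
    (toEnd K 𝔤 V h).eigenvectors_linearIndependent' _ hinj _
      fun n ↦ ⟨Module.End.mem_eigenspace_iff.2 (t.lie_h_pow_toEnd_e hv n), hne n⟩

variable {ι : Type*} (b : Basis ι K V) {wt : ι → ℤ}

lemma eq_zero_of_lie_e_eq_zero_of_forall_repr [Finite ι] (t : IsSl2Triple h e f)
    (hb : ∀ i, ⁅h, b i⁆ = (wt i : K) • b i) {v : V} (hv : ∀ i, 0 ≤ wt i → b.repr v i = 0)
    (hev : ⁅e, v⁆ = 0) : v = 0 := by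
  classical
  have := Fintype.ofFinite ι
  have := b.finiteDimensional_of_finite
  set comp : ℤ → V := fun k ↦ ∑ i with wt i = k, b.repr v i • b i with hcomp
  have hwt (k : ℤ) : ⁅h, comp k⁆ = (k : K) • comp k := by
    rw [hcomp, lie_sum, Finset.smul_sum]
    refine Finset.sum_congr rfl fun i hi ↦ ?_
    rw [lie_smul, hb, smul_comm, (Finset.mem_filter.1 hi).2]
  have hsum : ∑ k ∈ Finset.univ.image wt, comp k = v := by
    rw [hcomp, Finset.sum_fiberwise_of_maps_to fun i _ ↦
      Finset.mem_image_of_mem wt (Finset.mem_univ i)]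
    exact b.sum_repr v
  have hind : iSupIndep fun k : ℤ ↦ (toEnd K 𝔤 V h).eigenspace (k + 2 * (1 : ℕ) : K) :=
    (toEnd K 𝔤 V h).eigenspaces_iSupIndep.comp fun k l hkl ↦ by simpa using hkl
  have hkill : ∀ k ∈ Finset.univ.image wt, ⁅e, comp k⁆ = 0 := by
    refine (iSupIndep_iff_finsetSum_eq_zero_imp_eq_zero _).1 hind _ _ (fun k _ ↦ ?_) ?_
    · rw [Module.End.mem_eigenspace_iff]
      simpa using t.lie_h_pow_toEnd_e (hwt k) 1
    · rw [← lie_sum, hsum, hev]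
  rw [← hsum]
  refine Finset.sum_eq_zero fun k hk ↦ ?_
  rcases lt_or_ge k 0 with hneg | hnonneg
  · exact eq_zero_of_lie_e_eq_zero_of_weight_neg (K := K) t hneg
      (by rw [hwt, Int.cast_smul_eq_zsmul]) (hkill k hk)
      (exists_pow_e_eq_zero t.symm (by rw [neg_lie, hwt, ← neg_smul]))
  · refine Finset.sum_eq_zero fun i hi ↦ ?_
    rw [hv i (by rwa [(Finset.mem_filter.1 hi).2]), zero_smul]

omit [CharZero K] in
lemma repr_lie_h (hb : ∀ i, ⁅h, b i⁆ = (wt i : K) • b i) (v : V) (i : ι) :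
    b.repr ⁅h, v⁆ i = wt i * b.repr v i := by
  have : b.coord i ∘ₗ toEnd K 𝔤 V h = (wt i : K) • b.coord i := b.ext fun j ↦ by
    by_cases hij : j = i <;> simp [hb, hij]
  exact LinearMap.congr_fun this v

lemma repr_lie_e_eq_zero (t : IsSl2Triple h e f) (hb : ∀ i, ⁅h, b i⁆ = (wt i : K) • b i) {i j : ι}
    (hij : wt j ≠ wt i + 2) : b.repr ⁅e, b i⁆ j = 0 := by
  have hrepr := repr_lie_h b hb ⁅e, b i⁆ j
  rw [show ⁅h, ⁅e, b i⁆⁆ = (wt i + 2 : K) • ⁅e, b i⁆ by simpa using t.lie_h_pow_toEnd_e (hb i) 1,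
    map_smul, Finsupp.smul_apply, smul_eq_mul] at hrepr
  by_contra h0
  exact hij (by exact_mod_cast (mul_right_cancel₀ h0 hrepr).symm)

omit [CharZero K] in
lemma finrank_span_image_setOf [Fintype ι] (p : ι → Prop) [DecidablePred p] :
    finrank K (Submodule.span K (b '' {i | p i})) = Finset.card {i | p i} := by
  rw [Set.image_eq_range]
  refine (finrank_span_eq_card (b.linearIndependent.comp _ Subtype.val_injective)).trans ?_
  exact Fintype.card_subtype p

open Finset in
lemma finrank_ker_e_le_card [Fintype ι] (t : IsSl2Triple h e f)
    (hb : ∀ i, ⁅h, b i⁆ = (wt i : K) • b i) :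
    finrank K (LinearMap.ker (toEnd K 𝔤 V e)) ≤ #{i | wt i = 0 ∨ wt i = 1} := by
  have := b.finiteDimensional_of_finite
  set N := Submodule.span K (b '' {i | wt i < 0}) with hN
  set P := Submodule.span K (b '' {i | 2 ≤ wt i}) with hP
  have hPrange : P ≤ LinearMap.range (toEnd K 𝔤 V e) := by
    rw [hP, Submodule.span_le, Set.image_subset_iff]
    intro i (hi : 2 ≤ wt i)
    obtain ⟨n, hn⟩ := exists_pow_e_eq_zero t (hb i)
    exact mem_range_e_of_weight_pos t (by omega) (hb i) hn
  have hNP : Disjoint (N.map (toEnd K 𝔤 V e)) P := by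
    have hle : N.map (toEnd K 𝔤 V e) ≤ Submodule.span K (b '' {i | wt i < 2}) := by
      rw [hN, Submodule.map_span_le, Set.forall_mem_image]
      refine fun i (hi : wt i < 0) ↦ b.mem_span_image.2 fun j hj ↦ ?_
      by_contra hj2
      refine Finsupp.mem_support_iff.1 hj (repr_lie_e_eq_zero b t hb ?_)
      exact fun hij ↦ hj2 (show wt j < 2 by omega)
    refine Disjoint.mono_left hle (b.linearIndependent.disjoint_span_image ?_)
    exact Set.disjoint_left.2 fun i (hi : wt i < 2) (hi' : 2 ≤ wt i) ↦ by omega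
  have hNinj : finrank K (N.map (toEnd K 𝔤 V e)) = finrank K N := by
    rw [← LinearMap.range_domRestrict]
    refine LinearMap.finrank_range_of_inj ((injective_iff_map_eq_zero _).2 fun v hv ↦ ?_)
    refine Subtype.ext (eq_zero_of_lie_e_eq_zero_of_forall_repr b t hb (fun i hi ↦ ?_) hv)
    exact of_not_not fun h0 ↦
      (b.mem_span_image.1 v.2 (Finsupp.mem_support_iff.2 h0) : wt i < 0).not_ge hi
  have hle : #{i | wt i < 0} + #{i | 2 ≤ wt i} ≤ finrank K (LinearMap.range (toEnd K 𝔤 V e)) := by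
    rw [← finrank_span_image_setOf b, ← finrank_span_image_setOf b, ← hN, ← hP, ← hNinj,
      ← Submodule.finrank_sup_add_finrank_inf_eq, hNP.eq_bot, finrank_bot, add_zero]
    exact Submodule.finrank_mono (sup_le LinearMap.map_le_range hPrange)
  have hrank := (toEnd K 𝔤 V e).finrank_range_add_finrank_ker
  have hcard : #{i | wt i < 0} + #{i | 2 ≤ wt i} + #{i | wt i = 0 ∨ wt i = 1} = finrank K V := by
    rw [finrank_eq_card_basis b, ← card_univ, card_eq_sum_ones univ]
    simp only [card_filter, ← sum_add_distrib]
    exact sum_congr rfl fun i _ ↦ by split_ifs <;> omega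
  omega

end Sl2

section Chevalley

open LieModule

variable {K ι 𝔤 : Type*} [Field K] [LieRing 𝔤] [LieAlgebra K 𝔤]

variable (K) in
/-- Elements `E i`, `F i`, `H i` of a Lie algebra which satisfy the Chevalley relations for the
matrix `A`. The Serre relations are replaced by local nilpotency of `ad (E i)` and `ad (F i)`,
which implies them for a generalized Cartan matrix and is easier to check in a representation. -/
structure IsChevalleySystem (A : Matrix ι ι ℤ) (E F H : ι → 𝔤) : Prop where
  lie_h_h : ∀ i j, ⁅H i, H j⁆ = 0
  lie_e_f_same : ∀ i, ⁅E i, F i⁆ = H i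
  lie_e_f_ne : ∀ i j, i ≠ j → ⁅E i, F j⁆ = 0
  lie_h_e : ∀ i j, ⁅H i, E j⁆ = A i j • E j
  lie_h_f : ∀ i j, ⁅H i, F j⁆ = -(A i j • F j)
  exists_ad_e_pow_eq_zero : ∀ i x, ∃ n, (ad K 𝔤 (E i) ^ n) x = 0
  exists_ad_f_pow_eq_zero : ∀ i x, ∃ n, (ad K 𝔤 (F i) ^ n) x = 0

namespace IsChevalleySystem

variable {A : Matrix ι ι ℤ} {E F H : ι → 𝔤}

lemma symm (S : IsChevalleySystem K A E F H) : IsChevalleySystem K A F E (-H) where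
  lie_h_h i j := by simp [S.lie_h_h]
  lie_e_f_same i := by rw [← lie_skew, S.lie_e_f_same, Pi.neg_apply]
  lie_e_f_ne i j hij := by rw [← lie_skew, S.lie_e_f_ne j i hij.symm, neg_zero]
  lie_h_e i j := by rw [Pi.neg_apply, neg_lie, S.lie_h_f, neg_neg]
  lie_h_f i j := by rw [Pi.neg_apply, neg_lie, S.lie_h_e]
  exists_ad_e_pow_eq_zero := S.exists_ad_f_pow_eq_zero
  exists_ad_f_pow_eq_zero := S.exists_ad_e_pow_eq_zero

lemma isSl2Triple (S : IsChevalleySystem K A E F H) {i : ι} (hA : A i i = 2) (hH : H i ≠ 0) :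
    IsSl2Triple (H i) (E i) (F i) where
  h_ne_zero := hH
  lie_e_f := S.lie_e_f_same i
  lie_h_e_nsmul := by rw [S.lie_h_e, hA, ofNat_smul_eq_nsmul]
  lie_h_f_nsmul := by rw [S.lie_h_f, hA, ofNat_smul_eq_nsmul]

variable [CharZero K]

lemma eq_zero_of_lie_f_eq_zero (S : IsChevalleySystem K A E F H) {i : ι} (hA : A i i = 2) {x : 𝔤}
    {n : ℤ} (hn : 0 < n) (hx : ⁅H i, x⁆ = n • x) (hfx : ⁅F i, x⁆ = 0) : x = 0 := by
  by_cases hH : H i = 0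
  · rw [hH, zero_lie, eq_comm, ← Int.cast_smul_eq_zsmul K, smul_eq_zero_iff_right
      (Int.cast_ne_zero.2 hn.ne')] at hx
    exact hx
  · exact eq_zero_of_lie_f_eq_zero_of_weight_pos (K := K) (S.isSl2Triple hA hH) hn hx hfx
      (S.exists_ad_e_pow_eq_zero i x)

lemma serre_e (S : IsChevalleySystem K A E F H) {i j : ι} (hij : i ≠ j) (hA : A i i = 2)
    (hA' : A i j ≤ 0) : (ad K 𝔤 (E i) ^ ((-A i j).toNat + 1)) (E j) = 0 := by
  by_cases hH : H i = 0
  · have hE : E i = 0 := by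
      have := S.lie_h_e i i
      rw [hH, zero_lie, hA, eq_comm, ← Int.cast_smul_eq_zsmul K] at this
      simpa using this
    simp [hE]
  by_cases hEj : E j = 0
  · rw [hEj, map_zero]
  have t := S.isSl2Triple hA hH
  set n := (-A i j).toNat
  have hAn : A i j = -n := by rw [Int.toNat_of_nonneg (by omega), neg_neg]
  have P : t.symm.HasPrimitiveVectorWith (E j) (n : K) :=
    ⟨hEj, by rw [neg_lie, S.lie_h_e, hAn, neg_smul, neg_neg, natCast_zsmul, Nat.cast_smul_eq_nsmul],
      by rw [← lie_skew, S.lie_e_f_ne j i hij.symm, neg_zero]⟩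
  refine S.eq_zero_of_lie_f_eq_zero hA (n := n + 2) (by omega) ?_ ?_
  · have := P.lie_h_pow_toEnd_f (n + 1)
    rw [neg_lie, neg_eq_iff_eq_neg, ← neg_smul] at this
    rw [← Int.cast_smul_eq_zsmul K]
    refine this.trans (congrArg (· • (toEnd K 𝔤 𝔤 (E i) ^ (n + 1)) (E j)) ?_)
    push_cast
    ring
  · exact (P.lie_e_pow_succ_toEnd_f n).trans (by simp)

end IsChevalleySystem

section ToLieAlgebra

open CartanMatrix CartanMatrix.Relations

variable {E F H : ι → 𝔤}

variable (K) in
/-- The homomorphism from the free Lie algebra on the Serre generators with prescribed values. -/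
noncomputable def freeLift (E F H : ι → 𝔤) : FreeLieAlgebra K (Generators ι) →ₗ⁅K⁆ 𝔤 :=
  FreeLieAlgebra.lift K fun
    | .H i => H i
    | .E i => E i
    | .F i => F i

@[simp] lemma freeLift_E (i : ι) : freeLift K E F H (.of K (.E i)) = E i :=
  FreeLieAlgebra.lift_of_apply ..

@[simp] lemma freeLift_F (i : ι) : freeLift K E F H (.of K (.F i)) = F i :=
  FreeLieAlgebra.lift_of_apply ..

@[simp] lemma freeLift_H (i : ι) : freeLift K E F H (.of K (.H i)) = H i :=
  FreeLieAlgebra.lift_of_apply ..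

variable [DecidableEq ι] {A : Matrix ι ι ℤ}

variable (K A) in
/-- The quotient map from the free Lie algebra on the Serre generators onto `A.ToLieAlgebra K`. -/
noncomputable def serreMk : FreeLieAlgebra K (Generators ι) →ₗ⁅K⁆ A.ToLieAlgebra K where
  __ := (toIdeal K A).toSubmodule.mkQ
  map_lie' {x y} := LieSubmodule.Quotient.mk_bracket (toIdeal K A) x y

lemma serreMk_surjective : Function.Surjective (serreMk K A) :=
  LieSubmodule.Quotient.surjective_mk' (toIdeal K A)

lemma serreMk_eq_zero {x : FreeLieAlgebra K (Generators ι)} (hx : x ∈ toSet K A) :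
    serreMk K A x = 0 :=
  (LieSubmodule.Quotient.mk_eq_zero' (N := toIdeal K A)).2 (LieSubmodule.subset_lieSpan hx)

variable (K A) in
/-- The Chevalley generator `E i` of `A.ToLieAlgebra K`. -/
noncomputable def serreE (i : ι) : A.ToLieAlgebra K := serreMk K A (.of K (.E i))

variable (K A) in
/-- The Chevalley generator `F i` of `A.ToLieAlgebra K`. -/
noncomputable def serreF (i : ι) : A.ToLieAlgebra K := serreMk K A (.of K (.F i))

variable (K A) in
/-- The Chevalley generator `H i` of `A.ToLieAlgebra K`. -/
noncomputable def serreH (i : ι) : A.ToLieAlgebra K := serreMk K A (.of K (.H i))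

lemma serreH_lie_serreH (i j : ι) : ⁅serreH K A i, serreH K A j⁆ = 0 := by
  have := serreMk_eq_zero (A := A) (x := HH K (i, j)) (by simp [toSet])
  simpa [HH, serreH] using this

lemma serreE_lie_serreF_same (i : ι) : ⁅serreE K A i, serreF K A i⁆ = serreH K A i := by
  have := serreMk_eq_zero (A := A) (x := EF K (i, i)) (by simp [toSet])
  simpa [EF, sub_eq_zero, serreE, serreF, serreH] using this

lemma serreE_lie_serreF_ne {i j : ι} (hij : i ≠ j) : ⁅serreE K A i, serreF K A j⁆ = 0 := by
  have := serreMk_eq_zero (A := A) (x := EF K (i, j)) (by simp [toSet])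
  simpa [EF, hij, serreE, serreF] using this

lemma serreH_lie_serreE (i j : ι) : ⁅serreH K A i, serreE K A j⁆ = A i j • serreE K A j := by
  have := serreMk_eq_zero (A := A) (x := HE K A (i, j)) (by simp [toSet])
  simpa only [HE, Function.uncurry_apply_pair, Function.comp_apply, map_sub, LieHom.map_lie,
    map_zsmul, sub_eq_zero, serreE, serreH] using this

lemma serreH_lie_serreF (i j : ι) : ⁅serreH K A i, serreF K A j⁆ = -(A i j • serreF K A j) := by
  have := serreMk_eq_zero (A := A) (x := HF K A (i, j)) (by simp [toSet])
  simpa only [HF, Function.uncurry_apply_pair, Function.comp_apply, map_add, LieHom.map_lie,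
    map_zsmul, add_eq_zero_iff_eq_neg, serreF, serreH] using this

lemma map_ad_pow {L₁ L₂ : Type*} [LieRing L₁] [LieAlgebra K L₁] [LieRing L₂] [LieAlgebra K L₂]
    (φ : L₁ →ₗ⁅K⁆ L₂) (x y : L₁) (n : ℕ) :
    φ ((ad K L₁ x ^ n) y) = (ad K L₂ (φ x) ^ n) (φ y) := by
  induction n with
  | zero => rfl
  | succ n ih => simp only [pow_succ', Module.End.mul_apply, ad_apply, LieHom.map_lie, ih]

lemma ad_serreE_pow_serreE (i j : ι) :
    (ad K _ (serreE K A i) ^ ((-A i j).toNat + 1)) (serreE K A j) = 0 := by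
  have := serreMk_eq_zero (A := A) (x := adE K A (i, j)) (by simp [toSet])
  rwa [adE, Function.uncurry_apply_pair, map_ad_pow, LieHom.map_lie] at this

lemma ad_serreF_pow_serreF (i j : ι) :
    (ad K _ (serreF K A i) ^ ((-A i j).toNat + 1)) (serreF K A j) = 0 := by
  have := serreMk_eq_zero (A := A) (x := adF K A (i, j)) (by simp [toSet])
  rwa [adF, Function.uncurry_apply_pair, map_ad_pow, LieHom.map_lie] at this

lemma mem_of_serre_generators_mem (𝔰 : LieSubalgebra K (A.ToLieAlgebra K))
    (hE : ∀ i, serreE K A i ∈ 𝔰) (hF : ∀ i, serreF K A i ∈ 𝔰) (x : A.ToLieAlgebra K) : x ∈ 𝔰 := by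
  have hgen : ∀ g, serreMk K A (.of K g) ∈ 𝔰
    | .E i => hE i
    | .F i => hF i
    | .H i => by
      change serreH K A i ∈ 𝔰
      rw [← serreE_lie_serreF_same]
      exact 𝔰.lie_mem (hE i) (hF i)
  let φ : FreeLieAlgebra K (Generators ι) →ₗ⁅K⁆ 𝔰 := FreeLieAlgebra.lift K fun g ↦ ⟨_, hgen g⟩
  have hφ : 𝔰.incl.comp φ = serreMk K A := FreeLieAlgebra.hom_ext fun g ↦ by
    simp [φ, FreeLieAlgebra.lift_of_apply]
  obtain ⟨y, rfl⟩ := serreMk_surjective x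
  rw [← hφ]
  exact (φ y).2

lemma eq_top_of_serre_generators_lie_mem {p : Submodule K (A.ToLieAlgebra K)}
    (hE : ∀ i, serreE K A i ∈ p) (hF : ∀ i, serreF K A i ∈ p)
    (hlieE : ∀ i, ∀ x ∈ p, ⁅serreE K A i, x⁆ ∈ p) (hlieF : ∀ i, ∀ x ∈ p, ⁅serreF K A i, x⁆ ∈ p) :
    p = ⊤ := by
  let stabilizer : LieSubalgebra K (A.ToLieAlgebra K) :=
    { carrier := {y | ∀ x ∈ p, ⁅y, x⁆ ∈ p}
      add_mem' := fun ha hb x hx ↦ by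
        rw [add_lie]
        exact add_mem (ha x hx) (hb x hx)
      zero_mem' := fun x _ ↦ by simp
      smul_mem' := fun c y hy x hx ↦ by
        rw [smul_lie]
        exact p.smul_mem c (hy x hx)
      lie_mem' := fun {a b} ha hb x hx ↦ by
        rw [lie_lie]
        exact sub_mem (ha _ (hb x hx)) (hb _ (ha x hx)) }
  let 𝔰 : LieSubalgebra K (A.ToLieAlgebra K) :=
    { p with
      lie_mem' := fun {a b} _ hb ↦ mem_of_serre_generators_mem stabilizer hlieE hlieF a b hb }
  exact Submodule.eq_top_iff'.2 (mem_of_serre_generators_mem 𝔰 hE hF)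

lemma exists_ad_serreE_pow_eq_zero (i : ι) (x : A.ToLieAlgebra K) :
    ∃ n, (ad K _ (serreE K A i) ^ n) x = 0 := by
  refine (LieSubalgebra.mem_engel_iff K _ x).1 (mem_of_serre_generators_mem _ (fun j ↦ ?_)
    (fun j ↦ ?_) x) <;> rw [LieSubalgebra.mem_engel_iff]
  · exact ⟨_, ad_serreE_pow_serreE i j⟩
  · refine ⟨3, ?_⟩
    rcases eq_or_ne i j with rfl | hij
    · simp [pow_succ, serreE_lie_serreF_same, ← lie_skew (serreE K A i) (serreH K A i),
        serreH_lie_serreE]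
    · simp [pow_succ, serreE_lie_serreF_ne hij]

lemma exists_ad_serreF_pow_eq_zero (i : ι) (x : A.ToLieAlgebra K) :
    ∃ n, (ad K _ (serreF K A i) ^ n) x = 0 := by
  refine (LieSubalgebra.mem_engel_iff K _ x).1 (mem_of_serre_generators_mem _ (fun j ↦ ?_)
    (fun j ↦ ?_) x) <;> rw [LieSubalgebra.mem_engel_iff]
  · refine ⟨3, ?_⟩
    rcases eq_or_ne i j with rfl | hij
    · simp [pow_succ, ← lie_skew (serreF K A i) (serreE K A i), serreE_lie_serreF_same,
        ← lie_skew (serreF K A i) (serreH K A i), serreH_lie_serreF]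
    · simp [pow_succ, ← lie_skew (serreF K A i) (serreE K A j), serreE_lie_serreF_ne hij.symm]
  · exact ⟨_, ad_serreF_pow_serreF i j⟩

lemma isChevalleySystem_serre :
    IsChevalleySystem K A (serreE K A) (serreF K A) (serreH K A) where
  lie_h_h := serreH_lie_serreH
  lie_e_f_same := serreE_lie_serreF_same
  lie_e_f_ne _ _ := serreE_lie_serreF_ne
  lie_h_e := serreH_lie_serreE
  lie_h_f := serreH_lie_serreF
  exists_ad_e_pow_eq_zero := exists_ad_serreE_pow_eq_zero
  exists_ad_f_pow_eq_zero := exists_ad_serreF_pow_eq_zero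

variable [CharZero K]

lemma IsChevalleySystem.freeLift_eq_zero (S : IsChevalleySystem K A E F H)
    (hdiag : ∀ i, A i i = 2) (hoff : ∀ i j, i ≠ j → A i j ≤ 0)
    {x : FreeLieAlgebra K (Generators ι)} (hx : x ∈ toSet K A) : freeLift K E F H x = 0 := by
  rcases hx with ((((hx | hx) | hx) | hx) | hx) | hx <;> obtain ⟨⟨i, j⟩, rfl⟩ := hx
  · simp [HH, S.lie_h_h]
  · rcases eq_or_ne i j with rfl | hij
    · simp [EF, S.lie_e_f_same]
    · simp [EF, hij, S.lie_e_f_ne i j hij]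
  · simp only [HE, Function.uncurry_apply_pair, Function.comp_apply, map_sub, LieHom.map_lie,
      map_zsmul, freeLift_H, freeLift_E, S.lie_h_e, sub_self]
  · simp only [HF, Function.uncurry_apply_pair, Function.comp_apply, map_add, LieHom.map_lie,
      map_zsmul, freeLift_H, freeLift_F, S.lie_h_f, neg_add_cancel]
  · rw [adE, Function.uncurry_apply_pair, map_ad_pow, LieHom.map_lie]
    simp only [Function.comp_apply, freeLift_E]
    rcases eq_or_ne i j with rfl | hij
    · simp
    · exact S.serre_e hij (hdiag i) (hoff i j hij)
  · rw [adF, Function.uncurry_apply_pair, map_ad_pow, LieHom.map_lie]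
    simp only [Function.comp_apply, freeLift_F]
    rcases eq_or_ne i j with rfl | hij
    · simp
    · exact S.symm.serre_e hij (hdiag i) (hoff i j hij)

lemma IsChevalleySystem.exists_toLieAlgebra_hom (S : IsChevalleySystem K A E F H)
    (hdiag : ∀ i, A i i = 2) (hoff : ∀ i j, i ≠ j → A i j ≤ 0) :
    ∃ φ : A.ToLieAlgebra K →ₗ⁅K⁆ 𝔤, (∀ i, φ (serreE K A i) = E i) ∧
      (∀ i, φ (serreF K A i) = F i) ∧ ∀ i, φ (serreH K A i) = H i := by
  have hker : toIdeal K A ≤ (freeLift K E F H).ker :=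
    LieSubmodule.lieSpan_le.2 fun x hx ↦ LieHom.mem_ker.2 (S.freeLift_eq_zero hdiag hoff hx)
  let φ : A.ToLieAlgebra K →ₗ⁅K⁆ 𝔤 :=
    { (toIdeal K A).toSubmodule.liftQ
        (freeLift K E F H : FreeLieAlgebra K (Generators ι) →ₗ[K] 𝔤)
        fun _ hx ↦ LinearMap.mem_ker.2 (LieHom.mem_ker.1 (hker hx)) with
      map_lie' := fun {x y} ↦ by
        obtain ⟨x, rfl⟩ := serreMk_surjective x
        obtain ⟨y, rfl⟩ := serreMk_surjective y
        exact (freeLift K E F H).map_lie x y }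
  exact ⟨φ, freeLift_E, freeLift_F, freeLift_H⟩

end ToLieAlgebra

end Chevalley

section Terms

variable {X Y V : Type*} [AddCommGroup V]

/-- The value in `V` of a formal integral combination of elements of `X`, represented by a list,
when `x : X` is replaced by `φ x`. Lists make identities between such values decidable. -/
def evalTerms (φ : X → V) (l : List (ℤ × X)) : V := (l.map fun p ↦ p.1 • φ p.2).sum

@[simp] lemma evalTerms_nil (φ : X → V) : evalTerms φ [] = 0 := rfl

@[simp] lemma evalTerms_cons (φ : X → V) (p : ℤ × X) (l : List (ℤ × X)) :
    evalTerms φ (p :: l) = p.1 • φ p.2 + evalTerms φ l := by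
  simp [evalTerms]

lemma map_evalTerms {W : Type*} [AddCommGroup W] (T : V →+ W) (φ : X → V) (l : List (ℤ × X)) :
    T (evalTerms φ l) = evalTerms (T ∘ φ) l := by
  induction l with
  | nil => exact map_zero T
  | cons p l ih => simp [ih]

lemma evalTerms_append (φ : X → V) (l₁ l₂ : List (ℤ × X)) :
    evalTerms φ (l₁ ++ l₂) = evalTerms φ l₁ + evalTerms φ l₂ := by
  simp [evalTerms]

/-- The multiple of a formal combination by an integer. Zero multiples are dropped, which keeps
iterated combinations short. -/
def smulTerms (n : ℤ) (l : List (ℤ × X)) : List (ℤ × X) :=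
  if n = 0 then [] else l.map fun p ↦ (n * p.1, p.2)

lemma evalTerms_smulTerms (φ : X → V) (n : ℤ) (l : List (ℤ × X)) :
    evalTerms φ (smulTerms n l) = n • evalTerms φ l := by
  rw [smulTerms]
  split_ifs with hn
  · rw [hn, zero_smul, evalTerms_nil]
  · induction l with
    | nil => simp
    | cons p l ih => simp [ih, mul_smul]

/-- The formal combination obtained from `l` by replacing each `x` by the combination `g x`. -/
def bindTerms (g : X → List (ℤ × Y)) (l : List (ℤ × X)) : List (ℤ × Y) :=
  l.flatMap fun p ↦ smulTerms p.1 (g p.2)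

lemma evalTerms_bindTerms (φ : Y → V) (g : X → List (ℤ × Y)) (l : List (ℤ × X)) :
    evalTerms φ (bindTerms g l) = evalTerms (fun x ↦ evalTerms φ (g x)) l := by
  induction l with
  | nil => rfl
  | cons p l ih =>
    rw [bindTerms, List.flatMap_cons, evalTerms_append, evalTerms_smulTerms, evalTerms_cons, ← ih,
      bindTerms]

lemma lie_evalTerms {𝔤 : Type*} [LieRing 𝔤] {φ : X → 𝔤} {ψ : Y → 𝔤} {x : 𝔤}
    {g : X → List (ℤ × Y)} (hg : ∀ b, ⁅x, φ b⁆ = evalTerms ψ (g b)) (l : List (ℤ × X)) :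
    ⁅x, evalTerms φ l⁆ = evalTerms ψ (bindTerms g l) := by
  rw [evalTerms_bindTerms, ← funext hg]
  exact map_evalTerms (AddMonoidHom.mk' (fun y ↦ ⁅x, y⁆) (lie_add x)) φ l

lemma evalTerms_lie {𝔤 : Type*} [LieRing 𝔤] {φ : X → 𝔤} {ψ : Y → 𝔤} {x : 𝔤}
    {g : X → List (ℤ × Y)} (hg : ∀ b, ⁅φ b, x⁆ = evalTerms ψ (g b)) (l : List (ℤ × X)) :
    ⁅evalTerms φ l, x⁆ = evalTerms ψ (bindTerms g l) := by
  rw [evalTerms_bindTerms, ← funext hg]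
  exact map_evalTerms (AddMonoidHom.mk' (fun y ↦ ⁅y, x⁆) fun a b ↦ add_lie a b x) φ l

variable [DecidableEq X]

/-- The coefficient of `x` in a formal combination. -/
def termCoeff (l : List (ℤ × X)) (x : X) : ℤ := (l.map fun p ↦ if p.2 = x then p.1 else 0).sum

lemma repr_evalTerms {K V : Type*} [CommRing K] [AddCommGroup V] [Module K V] (B : Basis X K V)
    (l : List (ℤ × X)) (x : X) : B.repr (evalTerms B l) x = termCoeff l x := by
  induction l with
  | nil => simp [termCoeff]
  | cons p l ih => simp [ih, termCoeff, Finsupp.single_apply, ← Int.cast_smul_eq_zsmul K]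

/-- A formal combination is zero when all coefficients vanish. -/
def IsNullTerms (l : List (ℤ × X)) : Prop := ∀ p ∈ l, termCoeff l p.2 = 0

instance (l : List (ℤ × X)) : Decidable (IsNullTerms l) := inferInstanceAs (Decidable (∀ p ∈ l, _))

lemma IsNullTerms.evalTerms_eq_zero {l : List (ℤ × X)} (hl : IsNullTerms l) (φ : X → V) :
    evalTerms φ l = 0 := by
  have hfree : evalTerms (Finsupp.basisSingleOne (R := ℤ)) l = 0 := by
    refine Finsupp.basisSingleOne.ext_elem fun x ↦ ?_
    rw [repr_evalTerms, map_zero, Finsupp.zero_apply, Int.cast_eq_zero]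
    by_cases hx : ∃ p ∈ l, p.2 = x
    · obtain ⟨p, hp, rfl⟩ := hx
      exact hl p hp
    · refine List.sum_eq_zero fun c hc ↦ ?_
      obtain ⟨p, hp, rfl⟩ := List.mem_map.1 hc
      exact if_neg fun h ↦ hx ⟨p, hp, h⟩
  have := map_evalTerms (Finsupp.linearCombination ℤ φ).toAddMonoidHom
    (Finsupp.basisSingleOne (R := ℤ)) l
  rw [hfree, map_zero] at this
  simpa [Function.comp_def] using this.symm

lemma evalTerms_eq_of_isNullTerms {l₁ l₂ : List (ℤ × X)}
    (h : IsNullTerms (l₁ ++ smulTerms (-1) l₂)) (φ : X → V) :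
    evalTerms φ l₁ = evalTerms φ l₂ := by
  have := h.evalTerms_eq_zero φ
  rwa [evalTerms_append, evalTerms_smulTerms, neg_one_zsmul, add_neg_eq_zero] at this

end Terms

section AdjointModel

open CartanMatrix

/-- The positive roots of type `F₄` in coordinates with respect to the simple roots, which are
numbered as in `CartanMatrix.F₄`. -/
def posRoots : List (ℤ × ℤ × ℤ × ℤ) :=
  [(1, 0, 0, 0), (0, 1, 0, 0), (0, 0, 1, 0), (0, 0, 0, 1), (1, 1, 0, 0), (0, 1, 1, 0),
    (0, 0, 1, 1), (1, 1, 1, 0), (0, 2, 1, 0), (0, 1, 1, 1), (1, 2, 1, 0), (1, 1, 1, 1),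
    (0, 2, 1, 1), (2, 2, 1, 0), (1, 2, 1, 1), (0, 2, 2, 1), (2, 2, 1, 1), (1, 2, 2, 1),
    (2, 2, 2, 1), (1, 3, 2, 1), (2, 3, 2, 1), (2, 4, 2, 1), (2, 4, 3, 1), (2, 4, 3, 2)]

/-- The type of positive roots. -/
abbrev PosRoot := {a // a ∈ posRoots}

/-- The simple roots. -/
def simpleRoot : Fin 4 → PosRoot :=
  ![⟨(1, 0, 0, 0), by decide⟩, ⟨(0, 1, 0, 0), by decide⟩, ⟨(0, 0, 1, 0), by decide⟩,
    ⟨(0, 0, 0, 1), by decide⟩]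

/-- Indices for a basis of the adjoint representation: a basis vector of the Cartan subalgebra for
every simple root, and a root vector for every positive and every negative root. -/
inductive Idx
  | cartan (i : Fin 4)
  | pos (a : PosRoot)
  | neg (a : PosRoot)
  deriving DecidableEq, Fintype

namespace Idx

/-- The Chevalley involution on indices. -/
def opp : Idx → Idx
  | cartan i => cartan i
  | pos a => neg a
  | neg a => pos a

@[simp] lemma opp_opp (b : Idx) : b.opp.opp = b := by cases b <;> rfl

/-- The coordinates of the root of a basis vector. -/
def root : Idx → ℤ × ℤ × ℤ × ℤ
  | cartan _ => 0
  | pos a => a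
  | neg a => -a

/-- The height of the root of a basis vector. -/
def ht (b : Idx) : ℤ := b.root.1 + b.root.2.1 + b.root.2.2.1 + b.root.2.2.2

/-- The weight `⟨α, αᵢ^∨⟩` of a basis vector with root `α`. -/
def wt (i : Fin 4) (b : Idx) : ℤ :=
  F₄ i 0 * b.root.1 + F₄ i 1 * b.root.2.1 + F₄ i 2 * b.root.2.2.1 + F₄ i 3 * b.root.2.2.2

/-- The generator `Eᵢ` maps the basis vector `b` to the multiple of another basis vector given by
`raise i b`. The coefficients are those of Lusztig and Geck: they are nonnegative, and on root
vectors they are the lengths of root strings. -/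
def raise (i : Fin 4) : Idx → ℤ × Idx
  | cartan j => (|F₄ j i|, pos (simpleRoot i))
  | pos a =>
    if h : a.1 + simpleRoot i ∈ posRoots then
      (if a.1 - simpleRoot i ∈ posRoots then 2 else 1, pos ⟨_, h⟩)
    else (0, pos a)
  | neg a =>
    if a = simpleRoot i then (1, cartan i)
    else if h : a.1 - simpleRoot i ∈ posRoots then
      (if a.1 + simpleRoot i ∈ posRoots then 2 else 1, neg ⟨_, h⟩)
    else (0, neg a)

/-- The action of the generator `Fᵢ` on basis vectors, in the same format as `Idx.raise`. -/
def lower (i : Fin 4) (b : Idx) : ℤ × Idx := ((raise i b.opp).1, (raise i b.opp).2.opp)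

lemma ht_raise (i : Fin 4) (b : Idx) : (raise i b).1 = 0 ∨ ht (raise i b).2 = ht b + 1 := by
  decide +revert +kernel

lemma ht_lower (i : Fin 4) (b : Idx) : (lower i b).1 = 0 ∨ ht (lower i b).2 = ht b - 1 := by
  decide +revert +kernel

lemma wt_raise (i j : Fin 4) (b : Idx) :
    (raise j b).1 = 0 ∨ wt i (raise j b).2 = wt i b + F₄ i j := by
  decide +revert +kernel

lemma wt_lower (i j : Fin 4) (b : Idx) :
    (lower j b).1 = 0 ∨ wt i (lower j b).2 = wt i b - F₄ i j := by
  decide +revert +kernel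

lemma raise_lower_sub_lower_raise {V : Type*} [AddCommGroup V] (φ : Idx → V) (i j : Fin 4)
    (b : Idx) :
    ((lower j b).1 * (raise i (lower j b).2).1) • φ (raise i (lower j b).2).2
      - ((raise i b).1 * (lower j (raise i b).2).1) • φ (lower j (raise i b).2).2
      = (if i = j then wt i b else 0) • φ b := by
  have h : ∀ i j b, IsNullTerms
      [((lower j b).1 * (raise i (lower j b).2).1, (raise i (lower j b).2).2),
        (-((raise i b).1 * (lower j (raise i b).2).1), (lower j (raise i b).2).2),
        (-if i = j then wt i b else 0, b)] := by
    decide +kernel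
  have := (h i j b).evalTerms_eq_zero φ
  simp only [evalTerms_cons, evalTerms_nil, neg_smul, add_zero] at this
  rwa [← add_assoc, ← sub_eq_add_neg, ← sub_eq_add_neg, sub_eq_zero] at this

lemma raise_raise_raise (i : Fin 4) (b : Idx) :
    (raise i b).1 * (raise i (raise i b).2).1 * (raise i (raise i (raise i b).2).2).1 = 0 := by
  decide +revert +kernel

lemma lower_lower_lower (i : Fin 4) (b : Idx) :
    (lower i b).1 * (lower i (lower i b).2).1 * (lower i (lower i (lower i b).2).2).1 = 0 := by
  decide +revert +kernel

lemma ht_opp (b : Idx) : ht b.opp = -ht b := by decide +revert +kernel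

lemma wt_opp (i : Fin 4) (b : Idx) : wt i b.opp = -wt i b := by decide +revert +kernel

lemma lower_opp (i : Fin 4) (b : Idx) :
    lower i b.opp = ((raise i b).1, (raise i b).2.opp) := by
  simp [lower]

@[simp] lemma ht_cartan (i : Fin 4) : ht (cartan i) = 0 := rfl

lemma exists_eq_cartan {b : Idx} (hb : ht b = 0) : ∃ i, b = cartan i := by
  decide +revert +kernel

lemma exists_eq_neg_simpleRoot {b : Idx} (hb : ht b = -1) : ∃ i, b = neg (simpleRoot i) := by
  decide +revert +kernel

lemma exists_wt_raise_pos (j : Fin 4) {b : Idx} (hb : 0 < ht b) : ∃ q, 0 < wt q b + F₄ q j := by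
  decide +revert +kernel

/-- A number `i` such that `Fᵢ` does not annihilate the basis vector `b` of positive height. -/
def descent (b : Idx) : Fin 4 := ((List.finRange 4).find? fun i ↦ (lower i b).1 ≠ 0).getD 0

/-- The basis vector below `b` in the direction `Idx.descent b`. -/
def pred (b : Idx) : Idx := (lower (descent b) b).2

lemma lower_descent_ne_zero {b : Idx} (hb : 0 < ht b) : (lower (descent b) b).1 ≠ 0 := by
  decide +revert +kernel

lemma raise_descent_pred_ne_zero {b : Idx} (hb : 0 < ht b) : (raise (descent b) b.pred).1 ≠ 0 := by
  decide +revert +kernel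

lemma raise_descent_pred {b : Idx} (hb : 0 < ht b) : (raise (descent b) b.pred).2 = b := by
  decide +revert +kernel

lemma ht_pred {b : Idx} (hb : 0 < ht b) : ht b.pred = ht b - 1 :=
  (ht_lower (descent b) b).resolve_left (lower_descent_ne_zero hb)

lemma pred_pos_simpleRoot (i : Fin 4) : (pos (simpleRoot i)).pred = cartan i := by
  decide +revert +kernel

lemma descent_pos_simpleRoot (i : Fin 4) : (pos (simpleRoot i)).descent = i := by
  decide +revert +kernel

lemma ht_pred_nonneg {b : Idx} (hb : 0 < ht b) : 0 ≤ ht b.pred := by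
  rw [ht_pred hb]
  omega

@[elab_as_elim]
lemma induction_pred {P : (b : Idx) → 0 ≤ ht b → Prop}
    (cartan : ∀ i, P (cartan i) (ht_cartan i).ge)
    (step : ∀ b hb, P b.pred (ht_pred_nonneg hb) → P b hb.le) (b : Idx) (hb : 0 ≤ ht b) :
    P b hb := by
  rcases hb.eq_or_lt with h | h
  · obtain ⟨i, rfl⟩ := exists_eq_cartan h.symm
    exact cartan i
  · exact step b h (induction_pred cartan step b.pred (ht_pred_nonneg h))
termination_by (ht b).toNat
decreasing_by rw [ht_pred h]; omega

/-- The eigenvalue of `14 H₀ + H₁ + 13 H₂ + 5 H₃`. These coefficients, found by a search, separate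
all roots. -/
def regularWt (b : Idx) : ℤ := 14 * wt 0 b + wt 1 b + 13 * wt 2 b + 5 * wt 3 b

lemma exists_eq_cartan_of_regularWt {b : Idx} (hb : regularWt b = 0) : ∃ i, b = cartan i := by
  decide +revert +kernel

lemma eq_of_regularWt_eq {b c : Idx} (hb : regularWt b ≠ 0) (hbc : regularWt b = regularWt c) :
    b = c := by
  decide +revert +kernel

end Idx

end AdjointModel

section AdjointRepresentation

open CartanMatrix Idx

variable {K V : Type*} [Field K] [AddCommGroup V] [Module K V] (B : Basis Idx K V)

/-- The endomorphism which maps every basis vector to the multiple of a basis vector prescribed by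
`r`. -/
noncomputable def monomialEnd (r : Idx → ℤ × Idx) : Module.End K V :=
  B.constr K fun b ↦ (r b).1 • B (r b).2

@[simp] lemma monomialEnd_apply_basis (r : Idx → ℤ × Idx) (b : Idx) :
    monomialEnd B r (B b) = (r b).1 • B (r b).2 :=
  B.constr_basis ..

attribute [local instance] LieRing.ofAssociativeRing LieAlgebra.ofAssociativeAlgebra

lemma lie_monomialEnd_raise_lower (i j : Fin 4) :
    ⁅monomialEnd B (raise i), monomialEnd B (lower j)⁆
      = if i = j then monomialEnd B fun b ↦ (wt i b, b) else 0 := by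
  refine B.ext fun b ↦ ?_
  have := raise_lower_sub_lower_raise B i j b
  split_ifs with h <;> simpa [Ring.lie_def, smul_smul, h] using this

lemma lie_monomialEnd_wt {r : Idx → ℤ × Idx} {i : Fin 4} {c : ℤ}
    (hr : ∀ b, (r b).1 = 0 ∨ wt i (r b).2 = wt i b + c) :
    ⁅monomialEnd B fun b ↦ (wt i b, b), monomialEnd B r⁆ = c • monomialEnd B r := by
  refine B.ext fun b ↦ ?_
  rcases hr b with h | h
  · simp [h]
  · simp only [Ring.lie_def, LinearMap.sub_apply, Module.End.mul_apply,
      monomialEnd_apply_basis, map_zsmul, LinearMap.smul_apply, smul_smul, h, ← sub_smul]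
    congr 1
    ring

lemma isNilpotent_monomialEnd {r : Idx → ℤ × Idx}
    (hr : ∀ b, (r b).1 * (r (r b).2).1 * (r (r (r b).2).2).1 = 0) :
    IsNilpotent (monomialEnd B r) := by
  refine ⟨3, B.ext fun b ↦ ?_⟩
  simp [pow_succ', smul_smul, hr]

lemma exists_ad_pow_eq_zero_of_isNilpotent {A : Type*} [Ring A] [Algebra K A] {a : A}
    (ha : IsNilpotent a) (x : A) : ∃ n, (ad K A a ^ n) x = 0 := by
  obtain ⟨n, hn⟩ := LieAlgebra.ad_nilpotent_of_nilpotent (R := K) ha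
  exact ⟨n, by simp [hn]⟩

lemma isChevalleySystem_monomialEnd :
    IsChevalleySystem K F₄ (fun i ↦ monomialEnd B (raise i)) (fun i ↦ monomialEnd B (lower i))
      (fun i ↦ monomialEnd B fun b ↦ (wt i b, b)) where
  lie_h_h i j := by simpa using lie_monomialEnd_wt B (c := 0) (r := fun b ↦ (wt j b, b)) (i := i)
  lie_e_f_same i := by simpa using lie_monomialEnd_raise_lower B i i
  lie_e_f_ne i j hij := by simpa [hij] using lie_monomialEnd_raise_lower B i j
  lie_h_e i j := lie_monomialEnd_wt B (wt_raise i j)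
  lie_h_f i j := by simpa using lie_monomialEnd_wt B (wt_lower i j)
  exists_ad_e_pow_eq_zero i :=
    exists_ad_pow_eq_zero_of_isNilpotent (isNilpotent_monomialEnd B (raise_raise_raise i))
  exists_ad_f_pow_eq_zero i :=
    exists_ad_pow_eq_zero_of_isNilpotent (isNilpotent_monomialEnd B (lower_lower_lower i))

variable (K) [CharZero K]

lemma serreE_f₄_ne_zero (i : Fin 4) : serreE K F₄ i ≠ 0 := by
  intro hi
  have B : Basis Idx K (Idx →₀ K) := Finsupp.basisSingleOne
  obtain ⟨φ, hφ, -⟩ := (isChevalleySystem_monomialEnd B).exists_toLieAlgebra_hom F₄_diag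
    F₄_off_diag_nonpos
  have : monomialEnd B (raise i) (B (cartan i)) = 0 := by
    rw [← hφ, hi, map_zero, LinearMap.zero_apply]
  simp [raise, F₄_diag, B.ne_zero] at this

end AdjointRepresentation

section AdjointVec

open CartanMatrix Idx

variable {K 𝔤 : Type*} [Field K] [LieRing 𝔤] [LieAlgebra K 𝔤]

/-- Signs with opposite values on adjacent nodes of the Dynkin diagram. They relate the basis
vectors with nonnegative structure constants to the Chevalley generators. -/
def nodeSign : Fin 4 → ℤ := ![1, -1, 1, -1]

lemma nodeSign_mul_nodeSign (i : Fin 4) : nodeSign i * nodeSign i = 1 := by decide +revert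

lemma nodeSign_ne_zero (i : Fin 4) : nodeSign i ≠ 0 := by decide +revert

lemma nodeSign_mul_F₄ (i j : Fin 4) : nodeSign j * F₄ j i = nodeSign i * |F₄ j i| := by
  decide +revert

variable (K) in
/-- The vectors of nonnegative height of `adjointVec`, obtained from the Cartan subalgebra by
raising operators. The value at indices of negative height is irrelevant. -/
noncomputable def posVec (E H : Fin 4 → 𝔤) (b : Idx) : 𝔤 :=
  if 0 < ht b then
    ((raise b.descent b.pred).1 : K)⁻¹ • ⁅E b.descent, posVec E H b.pred⁆
  else match b with
    | cartan i => -(nodeSign i • H i)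
    | _ => 0
termination_by (ht b).toNat
decreasing_by rw [ht_pred ‹_›]; omega

variable (K) in
/-- The basis of the adjoint representation in the Lie algebra generated by a Chevalley system, with
the structure constants of `Idx.raise` and `Idx.lower`. -/
noncomputable def adjointVec (E F H : Fin 4 → 𝔤) (b : Idx) : 𝔤 :=
  if 0 ≤ ht b then posVec K E H b else -posVec K F (-H) b.opp

variable {E F H : Fin 4 → 𝔤}

lemma posVec_cartan (i : Fin 4) : posVec K E H (cartan i) = -(nodeSign i • H i) := by
  rw [posVec, if_neg (ht_cartan i).not_gt]

lemma adjointVec_cartan (i : Fin 4) : adjointVec K E F H (cartan i) = -(nodeSign i • H i) := by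
  rw [adjointVec, if_pos (ht_cartan i).ge, posVec_cartan]

lemma adjointVec_opp (b : Idx) : adjointVec K F E (-H) b.opp = -adjointVec K E F H b := by
  rcases lt_trichotomy (ht b) 0 with hb | hb | hb
  · rw [adjointVec, if_pos (by rw [ht_opp]; omega), adjointVec, if_neg (by omega), neg_neg]
  · obtain ⟨i, rfl⟩ := exists_eq_cartan hb
    simp [opp, adjointVec_cartan]
  · rw [adjointVec, if_neg (by rw [ht_opp]; omega), adjointVec, if_pos (by omega), neg_neg, opp_opp]

lemma lie_adjointVec_eq_raise {x : 𝔤} {i : Fin 4} {b : Idx}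
    (h : ⁅x, adjointVec K F E (-H) b.opp⁆
      = (lower i b.opp).1 • adjointVec K F E (-H) (lower i b.opp).2) :
    ⁅x, adjointVec K E F H b⁆ = (raise i b).1 • adjointVec K E F H (raise i b).2 := by
  rwa [lower_opp, adjointVec_opp, adjointVec_opp, lie_neg, smul_neg, neg_inj] at h

lemma lie_adjointVec_eq_lower {x : 𝔤} {i : Fin 4} {b : Idx}
    (h : ⁅x, adjointVec K F E (-H) b.opp⁆
      = (raise i b.opp).1 • adjointVec K F E (-H) (raise i b.opp).2) :
    ⁅x, adjointVec K E F H b⁆ = (lower i b).1 • adjointVec K E F H (lower i b).2 := by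
  rwa [← opp_opp (raise i b.opp).2, adjointVec_opp, adjointVec_opp, lie_neg, smul_neg, neg_inj]
    at h

variable [CharZero K]

lemma smul_adjointVec {b : Idx} (hb : 0 < ht b) :
    (raise b.descent b.pred).1 • adjointVec K E F H b
      = ⁅E b.descent, adjointVec K E F H b.pred⁆ := by
  rw [adjointVec, if_pos hb.le, posVec.eq_def, if_pos hb, adjointVec, if_pos (ht_pred_nonneg hb),
    ← Int.cast_smul_eq_zsmul K,
    smul_inv_smul₀ (Int.cast_ne_zero.2 (raise_descent_pred_ne_zero hb))]

namespace IsChevalleySystem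

variable (S : IsChevalleySystem K F₄ E F H)
include S

lemma adjointVec_pos_simpleRoot (i : Fin 4) :
    adjointVec K E F H (pos (simpleRoot i)) = nodeSign i • E i := by
  have h := smul_adjointVec (K := K) (E := E) (F := F) (H := H) (b := pos (simpleRoot i))
    (by decide +revert)
  rw [pred_pos_simpleRoot, descent_pos_simpleRoot, adjointVec_cartan, lie_neg, lie_zsmul,
    ← lie_skew, smul_neg, neg_neg, S.lie_h_e, smul_comm] at h
  simp only [raise, F₄_diag] at h
  rw [← Int.cast_smul_eq_zsmul K, ← Int.cast_smul_eq_zsmul K 2 (nodeSign i • E i)] at h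
  exact smul_right_injective 𝔤 (Int.cast_ne_zero.2 two_ne_zero) h

lemma adjointVec_neg_simpleRoot (i : Fin 4) :
    adjointVec K E F H (neg (simpleRoot i)) = -(nodeSign i • F i) := by
  rw [← S.symm.adjointVec_pos_simpleRoot, eq_neg_iff_add_eq_zero, add_comm,
    ← eq_neg_iff_add_eq_zero]
  exact adjointVec_opp (neg (simpleRoot i))

lemma lie_h_adjointVec (i : Fin 4) (b : Idx) :
    ⁅H i, adjointVec K E F H b⁆ = wt i b • adjointVec K E F H b := by
  wlog hb : 0 ≤ ht b generalizing E F H b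
  · have := this S.symm b.opp (by rw [ht_opp]; omega)
    simpa [adjointVec_opp, wt_opp] using this
  induction b, hb using induction_pred with
  | cartan j =>
    have hwt : wt i (cartan j) = 0 := by simp [wt, root]
    rw [adjointVec_cartan, lie_neg, lie_zsmul, S.lie_h_h, hwt, smul_zero, neg_zero, zero_smul]
  | step b hb ih =>
    have hne := raise_descent_pred_ne_zero hb
    have hwt := (wt_raise i b.descent b.pred).resolve_left hne
    rw [raise_descent_pred hb] at hwt
    refine smul_right_injective 𝔤 (Int.cast_ne_zero (α := K).2 hne) ?_
    simp only [Int.cast_smul_eq_zsmul]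
    rw [← lie_zsmul, smul_comm, smul_adjointVec hb, leibniz_lie, ih, S.lie_h_e, lie_zsmul, hwt,
      smul_lie, add_smul, add_comm]

lemma lie_f_lie_e_adjointVec {i j : Fin 4} {b : Idx}
    (hF : ⁅F j, adjointVec K E F H b⁆ = (lower j b).1 • adjointVec K E F H (lower j b).2)
    (hE : (lower j b).1 = 0 ∨ ⁅E i, adjointVec K E F H (lower j b).2⁆
      = (raise i (lower j b).2).1 • adjointVec K E F H (raise i (lower j b).2).2) :
    ⁅F j, ⁅E i, adjointVec K E F H b⁆⁆ = ((raise i b).1 * (lower j (raise i b).2).1) •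
      adjointVec K E F H (lower j (raise i b).2).2 := by
  have hE' : ⁅E i, (lower j b).1 • adjointVec K E F H (lower j b).2⁆
      = ((lower j b).1 * (raise i (lower j b).2).1) •
        adjointVec K E F H (raise i (lower j b).2).2 := by
    rcases hE with h | h
    · simp [h]
    · rw [lie_zsmul, h, smul_smul]
  have hEF : ⁅⁅E i, F j⁆, adjointVec K E F H b⁆
      = (if i = j then wt i b else 0) • adjointVec K E F H b := by
    split_ifs with h
    · rw [← h, S.lie_e_f_same, S.lie_h_adjointVec]
    · rw [S.lie_e_f_ne i j h, zero_lie, zero_smul]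
  rw [leibniz_lie, hF, hE', ← lie_skew (F j) (E i), neg_lie, hEF, neg_add_eq_sub,
    ← raise_lower_sub_lower_raise, sub_sub_cancel]

lemma lie_e_adjointVec_of_ht_mem {b : Idx} (hb : ht b = -1 ∨ ht b = 0) (i : Fin 4) :
    ⁅E i, adjointVec K E F H b⁆ = (raise i b).1 • adjointVec K E F H (raise i b).2 := by
  rcases hb with hb | hb
  · obtain ⟨j, rfl⟩ := exists_eq_neg_simpleRoot hb
    rw [S.adjointVec_neg_simpleRoot, lie_neg, lie_zsmul]
    rcases eq_or_ne i j with rfl | hij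
    · simp [raise, S.lie_e_f_same, adjointVec_cartan]
    · have : (raise i (neg (simpleRoot j))).1 = 0 := by decide +revert +kernel
      rw [S.lie_e_f_ne i j hij, this, smul_zero, neg_zero, zero_smul]
  · obtain ⟨j, rfl⟩ := exists_eq_cartan hb
    rw [adjointVec_cartan, lie_neg, lie_zsmul, ← lie_skew, S.lie_h_e, smul_neg, neg_neg, raise,
      S.adjointVec_pos_simpleRoot, smul_smul, smul_smul, nodeSign_mul_F₄, mul_comm]

lemma lie_f_adjointVec_of_lie_e {b : Idx} (hb : 0 ≤ ht b)
    (hE : ∀ c, -1 ≤ ht c → ht c + 2 ≤ ht b → ∀ i, ⁅E i, adjointVec K E F H c⁆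
      = (raise i c).1 • adjointVec K E F H (raise i c).2) (j : Fin 4) :
    ⁅F j, adjointVec K E F H b⁆ = (lower j b).1 • adjointVec K E F H (lower j b).2 := by
  induction b, hb using induction_pred generalizing j with
  | cartan i =>
    exact lie_adjointVec_eq_lower (S.symm.lie_e_adjointVec_of_ht_mem (.inr (ht_cartan i)) j)
  | step b hb ih =>
    have hpred := ht_pred hb
    have hne := raise_descent_pred_ne_zero hb
    have h := S.lie_f_lie_e_adjointVec (i := b.descent) (ih (fun c hc hcb ↦ hE c hc (by omega)) j)
      ((ht_lower j b.pred).imp_right fun h ↦ hE _ (by omega) (by omega) _)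
    rw [← smul_adjointVec hb, lie_zsmul, raise_descent_pred hb, mul_smul] at h
    refine smul_right_injective 𝔤 (Int.cast_ne_zero (α := K).2 hne) ?_
    simpa only [Int.cast_smul_eq_zsmul] using h

/-- The difference of both sides is annihilated by all `F j`, but has positive weight with respect
to some `H j`. -/
lemma lie_e_adjointVec_of_neg_one_le {b : Idx} (hb : -1 ≤ ht b) (i : Fin 4) :
    ⁅E i, adjointVec K E F H b⁆ = (raise i b).1 • adjointVec K E F H (raise i b).2 := by
  by_cases hb0 : ht b ≤ 0
  · exact S.lie_e_adjointVec_of_ht_mem (by omega) i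
  rw [not_le] at hb0
  have hE (c : Idx) (hc : -1 ≤ ht c) (_ : ht c < ht b) (k : Fin 4) :=
    lie_e_adjointVec_of_neg_one_le hc k
  obtain ⟨j, hj⟩ := exists_wt_raise_pos i hb0
  rw [← sub_eq_zero]
  refine S.eq_zero_of_lie_f_eq_zero (F₄_diag j) hj ?_ ?_
  · have hraise : ⁅H j, (raise i b).1 • adjointVec K E F H (raise i b).2⁆
        = (wt j b + F₄ j i) • (raise i b).1 • adjointVec K E F H (raise i b).2 := by
      rw [lie_zsmul, S.lie_h_adjointVec, smul_comm]
      rcases wt_raise j i b with h | h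
      · simp [h]
      · rw [h]
    rw [lie_sub, hraise, leibniz_lie, S.lie_h_e, S.lie_h_adjointVec, smul_lie, lie_zsmul,
      smul_sub, add_smul, add_comm, add_smul]
  · have hF := S.lie_f_adjointVec_of_lie_e hb0.le fun c hc hcb ↦ hE c hc (by omega)
    have hFE := S.lie_f_lie_e_adjointVec (i := i) (hF j)
      ((ht_lower j b).imp_right fun h ↦ hE _ (by omega) (by omega) _)
    have hF' : ⁅F j, (raise i b).1 • adjointVec K E F H (raise i b).2⁆
        = ((raise i b).1 * (lower j (raise i b).2).1) •
          adjointVec K E F H (lower j (raise i b).2).2 := by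
      rcases ht_raise i b with h | h
      · simp [h]
      · rw [lie_zsmul, S.lie_f_adjointVec_of_lie_e (by omega)
          fun c hc hcb ↦ hE c hc (by omega), smul_smul]
    rw [lie_sub, hFE, hF', sub_self]
termination_by (ht b).toNat

lemma lie_e_adjointVec (i : Fin 4) (b : Idx) :
    ⁅E i, adjointVec K E F H b⁆ = (raise i b).1 • adjointVec K E F H (raise i b).2 := by
  by_cases hb : -1 ≤ ht b
  · exact S.lie_e_adjointVec_of_neg_one_le hb i
  · exact lie_adjointVec_eq_raise <| S.symm.lie_f_adjointVec_of_lie_e (by rw [ht_opp]; omega)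
      (fun c hc _ ↦ S.symm.lie_e_adjointVec_of_neg_one_le hc) i

lemma lie_f_adjointVec (i : Fin 4) (b : Idx) :
    ⁅F i, adjointVec K E F H b⁆ = (lower i b).1 • adjointVec K E F H (lower i b).2 :=
  lie_adjointVec_eq_lower (S.symm.lie_e_adjointVec i b.opp)

end IsChevalleySystem

end AdjointVec

section AdjointBasis

open CartanMatrix Idx

variable {K 𝔤 : Type*} [Field K] [CharZero K] [LieRing 𝔤] [LieAlgebra K 𝔤]

namespace IsChevalleySystem

variable {E F H : Fin 4 → 𝔤} (S : IsChevalleySystem K F₄ E F H)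
include S

lemma h_ne_zero {i : Fin 4} (hE : E i ≠ 0) : H i ≠ 0 := by
  intro hH
  have := S.lie_h_e i i
  rw [hH, zero_lie, F₄_diag, ← Int.cast_smul_eq_zsmul K, eq_comm, smul_eq_zero] at this
  exact this.elim (Int.cast_ne_zero.2 two_ne_zero) hE

lemma f_ne_zero {i : Fin 4} (hE : E i ≠ 0) : F i ≠ 0 := by
  intro hF
  refine S.h_ne_zero hE ?_
  rw [← S.lie_e_f_same, hF, lie_zero]

lemma adjointVec_ne_zero (hE : ∀ i, E i ≠ 0) (b : Idx) : adjointVec K E F H b ≠ 0 := by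
  wlog hb : 0 ≤ ht b generalizing E F H b
  · have := this S.symm (fun i ↦ S.f_ne_zero (hE i)) b.opp (by rw [ht_opp]; omega)
    rwa [adjointVec_opp, neg_ne_zero] at this
  induction b, hb using induction_pred with
  | cartan i =>
    rw [adjointVec_cartan, neg_ne_zero, ← Int.cast_smul_eq_zsmul K]
    exact smul_ne_zero (Int.cast_ne_zero.2 (by decide +revert)) (S.h_ne_zero (hE i))
  | step b hb ih =>
    intro h0
    have h := S.lie_f_adjointVec (descent b) b
    rw [h0, lie_zero, ← Int.cast_smul_eq_zsmul K, eq_comm, smul_eq_zero] at h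
    exact h.elim (Int.cast_ne_zero.2 (lower_descent_ne_zero hb)) ih

lemma linearIndependent_h (hE : ∀ i, E i ≠ 0) : LinearIndependent K H := by
  refine Fintype.linearIndependent_iff.2 fun c hc i ↦ ?_
  have hvec : Matrix.vecMul c (F₄.map (Int.cast : ℤ → K)) = 0 := by
    ext j
    have : ⁅∑ i, c i • H i, E j⁆ = Matrix.vecMul c (F₄.map (Int.cast : ℤ → K)) j • E j := by
      simp [sum_lie, S.lie_h_e, Matrix.vecMul, dotProduct, Finset.sum_smul, mul_smul,
        Int.cast_smul_eq_zsmul]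
    rw [hc, zero_lie, eq_comm] at this
    exact (smul_eq_zero.1 this).resolve_right (hE j)
  refine congrFun (Matrix.eq_zero_of_vecMul_eq_zero ?_ hvec) i
  rw [← Int.cast_det, F₄_det]
  simp

lemma lie_regular_adjointVec (b : Idx) :
    ⁅14 • H 0 + H 1 + 13 • H 2 + 5 • H 3, adjointVec K E F H b⁆
      = regularWt b • adjointVec K E F H b := by
  simp only [add_lie, nsmul_lie, S.lie_h_adjointVec, regularWt]
  module

lemma linearIndependent_adjointVec_roots (hE : ∀ i, E i ≠ 0) :
    LinearIndependent K fun b : {b // regularWt b ≠ 0} ↦ adjointVec K E F H b := by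
  refine End.eigenvectors_linearIndependent' (ad K 𝔤 (14 • H 0 + H 1 + 13 • H 2 + 5 • H 3))
    (fun b : {b // regularWt b ≠ 0} ↦ (regularWt b : K)) (fun b c hbc ↦ ?_) _
    fun b ↦ ⟨End.mem_eigenspace_iff.2 ?_, S.adjointVec_ne_zero hE b⟩
  · exact Subtype.ext (eq_of_regularWt_eq b.2 (Int.cast_injective hbc))
  · rw [ad_apply, S.lie_regular_adjointVec, Int.cast_smul_eq_zsmul]

lemma linearIndependent_adjointVec (hE : ∀ i, E i ≠ 0) :
    LinearIndependent K (adjointVec K E F H) := by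
  refine Fintype.linearIndependent_iff.2 fun c hc ↦ ?_
  have hroot (b : Idx) (hb : regularWt b ≠ 0) : c b = 0 := by
    have h := congrArg (fun x ↦ ⁅14 • H 0 + H 1 + 13 • H 2 + 5 • H 3, x⁆) hc
    simp only [lie_sum, lie_smul, S.lie_regular_adjointVec, lie_zero, ← Int.cast_smul_eq_zsmul K,
      smul_smul] at h
    rw [← Fintype.sum_of_injective (Subtype.val : {b // regularWt b ≠ 0} → Idx)
      Subtype.val_injective (fun b ↦ (c b * regularWt b) • adjointVec K E F H b) _
      (fun b hb' ↦ by simp_all) fun _ ↦ rfl] at h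
    have := Fintype.linearIndependent_iff.1 (S.linearIndependent_adjointVec_roots hE) _ h ⟨b, hb⟩
    exact (mul_eq_zero.1 this).resolve_right (Int.cast_ne_zero.2 hb)
  have hcartan (i : Fin 4) : c (cartan i) = 0 := by
    rw [← Fintype.sum_of_injective cartan (fun i j h ↦ by simpa using h)
      (fun i ↦ (-(c (cartan i) * nodeSign i)) • H i) _
      (fun b hb ↦ ?_) fun i ↦ ?_] at hc
    · have := Fintype.linearIndependent_iff.1 (S.linearIndependent_h hE) _ hc i
      simpa [nodeSign_ne_zero] using this
    · rw [hroot b fun h ↦ hb ?_, zero_smul]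
      obtain ⟨i, rfl⟩ := exists_eq_cartan_of_regularWt h
      exact ⟨i, rfl⟩
    · rw [adjointVec_cartan, smul_neg, ← Int.cast_smul_eq_zsmul K, smul_smul, neg_smul]
  intro b
  by_cases hb : regularWt b = 0
  · obtain ⟨i, rfl⟩ := exists_eq_cartan_of_regularWt hb
    exact hcartan i
  · exact hroot b hb

end IsChevalleySystem

lemma span_adjointVec_serre :
    Submodule.span K (Set.range (adjointVec K (serreE K F₄) (serreF K F₄) (serreH K F₄))) = ⊤ := by
  have S := isChevalleySystem_serre (K := K) (A := F₄)
  set φ := adjointVec K (serreE K F₄) (serreF K F₄) (serreH K F₄)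
  have lie_mem (y : F₄.ToLieAlgebra K) (hy : ∀ b, ⁅y, φ b⁆ ∈ Submodule.span K (Set.range φ)) :
      ∀ x ∈ Submodule.span K (Set.range φ), ⁅y, x⁆ ∈ Submodule.span K (Set.range φ) :=
    fun x hx ↦ Submodule.span_le (p := (Submodule.span K (Set.range φ)).comap (ad K _ y)).2
      (Set.range_subset_iff.2 hy) hx
  have smul_mem (n : ℤ) (b : Idx) : n • φ b ∈ Submodule.span K (Set.range φ) :=
    zsmul_mem (Submodule.subset_span (Set.mem_range_self b)) n
  refine eq_top_of_serre_generators_lie_mem (fun i ↦ ?_) (fun i ↦ ?_)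
    (fun i ↦ lie_mem _ fun b ↦ ?_) (fun i ↦ lie_mem _ fun b ↦ ?_)
  · rw [← one_zsmul (serreE K F₄ i), ← nodeSign_mul_nodeSign i, mul_smul,
      ← S.adjointVec_pos_simpleRoot]
    exact smul_mem _ _
  · rw [← one_zsmul (serreF K F₄ i), ← nodeSign_mul_nodeSign i, mul_smul,
      ← neg_mem_iff, ← smul_neg, ← S.adjointVec_neg_simpleRoot]
    exact smul_mem _ _
  · rw [S.lie_e_adjointVec]
    exact smul_mem _ _
  · rw [S.lie_f_adjointVec]
    exact smul_mem _ _

variable (K) in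
/-- The basis of the Lie algebra of type `F₄` with the structure constants of `Idx.raise` and
`Idx.lower`. -/
noncomputable def f₄Basis : Basis Idx K (f₄ K) :=
  Basis.mk (isChevalleySystem_serre.linearIndependent_adjointVec (serreE_f₄_ne_zero K))
    span_adjointVec_serre.ge

lemma f₄Basis_apply (b : Idx) :
    f₄Basis K b = adjointVec K (serreE K F₄) (serreF K F₄) (serreH K F₄) b :=
  Basis.mk_apply ..

end AdjointBasis

section Complement

variable {K V : Type*} [Field K] [AddCommGroup V] [Module K V] [FiniteDimensional K V]

lemma eq_span_singleton_sup_of_finrank {G D : Submodule K V} {e : V} {n : ℕ} (hDG : D ≤ G)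
    (heG : e ∈ G) (heD : e ∉ D) (hG : finrank K G ≤ n + 1) (hD : n ≤ finrank K D) :
    finrank K G = n + 1 ∧ finrank K D = n ∧ G = Submodule.span K {e} ⊔ D ∧
      Submodule.span K {e} ⊓ D = ⊥ := by
  have he : e ≠ 0 := fun h ↦ heD (h ▸ D.zero_mem)
  have hinf : Submodule.span K {e} ⊓ D = ⊥ :=
    (Submodule.disjoint_span_singleton' he).2 heD |>.symm.eq_bot
  have hle : Submodule.span K {e} ⊔ D ≤ G :=
    sup_le ((Submodule.span_singleton_le_iff_mem ..).2 heG) hDG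
  have hfinrank := Submodule.finrank_sup_add_finrank_inf_eq (Submodule.span K {e}) D
  rw [hinf, finrank_bot, finrank_span_singleton he] at hfinrank
  have := Submodule.finrank_mono hle
  exact ⟨by omega, by omega, (Submodule.eq_of_le_of_finrank_le hle (by omega)).symm, hinf⟩

end Complement

section Centralizer

variable {K 𝔤 : Type*} [CommRing K] [LieRing 𝔤] [LieAlgebra K 𝔤]

lemma mem_centralizerOf {x y : 𝔤} : y ∈ centralizerOf K x ↔ ⁅y, x⁆ = 0 := Iff.rfl

lemma toSubmodule_centralizerOf (x : 𝔤) :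
    (centralizerOf K x).toSubmodule = LinearMap.ker (ad K 𝔤 x) := by
  ext y
  rw [LieSubalgebra.mem_toSubmodule, mem_centralizerOf, LinearMap.mem_ker, ad_apply, ← lie_skew,
    neg_eq_zero]

lemma lie_mem_derivedOf {𝔨 : LieSubalgebra K 𝔤} {x y : 𝔤} (hx : x ∈ 𝔨) (hy : y ∈ 𝔨) :
    ⁅x, y⁆ ∈ derivedOf K 𝔨 :=
  Submodule.subset_span ⟨x, hx, y, hy, rfl⟩

lemma derivedOf_le (𝔨 : LieSubalgebra K 𝔤) : derivedOf K 𝔨 ≤ 𝔨.toSubmodule := by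
  refine Submodule.span_le.2 ?_
  rintro _ ⟨x, hx, y, hy, rfl⟩
  exact 𝔨.lie_mem hx hy

lemma killingForm_eq_zero_of_mem_derivedOf {e x y : 𝔤}
    (hy : ∀ a ∈ centralizerOf K e, ⁅y, a⁆ ∈ LinearMap.range (ad K 𝔤 e))
    (hx : x ∈ derivedOf K (centralizerOf K e)) : killingForm K 𝔤 y x = 0 := by
  suffices derivedOf K (centralizerOf K e) ≤ LinearMap.ker (killingForm K 𝔤 y) from this hx
  refine Submodule.span_le.2 ?_
  rintro _ ⟨a, ha, b, hb, rfl⟩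
  obtain ⟨w, hw⟩ := hy a ha
  have hbe : ⁅b, e⁆ = 0 := hb
  rw [ad_apply, ← lie_skew] at hw
  rw [SetLike.mem_coe, LinearMap.mem_ker, ← LieModule.traceForm_apply_lie_apply, ← hw, map_neg,
    LinearMap.neg_apply, LieModule.traceForm_apply_lie_apply, ← lie_skew, hbe, neg_zero, map_zero,
    neg_zero]

end Centralizer

section LeviTriple

variable {K 𝔤 ι : Type*} [Field K] [CharZero K] [LieRing 𝔤] [LieAlgebra K 𝔤]
  {A : Matrix ι ι ℤ} {E F H : ι → 𝔤}

lemma IsChevalleySystem.isSl2Triple_sum (S : IsChevalleySystem K A E F H) {I : Finset ι}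
    {c : ι → ℤ} (hc : ∀ j ∈ I, ∑ i ∈ I, c i * A i j = 2) {j : ι} (hj : j ∈ I) (hE : E j ≠ 0) :
    IsSl2Triple (∑ i ∈ I, c i • H i) (∑ i ∈ I, E i) (∑ i ∈ I, c i • F i) := by
  have lie_h_e {j : ι} (hj : j ∈ I) : ⁅∑ i ∈ I, c i • H i, E j⁆ = 2 • E j := by
    simp_rw [sum_lie, zsmul_lie, S.lie_h_e, smul_smul, ← Finset.sum_smul, hc j hj, ofNat_zsmul]
  have lie_h_f {j : ι} (hj : j ∈ I) : ⁅∑ i ∈ I, c i • H i, F j⁆ = -(2 • F j) := by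
    simp_rw [sum_lie, zsmul_lie, S.lie_h_f, smul_neg, smul_smul, Finset.sum_neg_distrib,
      ← Finset.sum_smul, hc j hj, ofNat_zsmul]
  have lie_e_f {i : ι} (hi : i ∈ I) : ⁅∑ j ∈ I, E j, F i⁆ = H i := by
    rw [sum_lie, Finset.sum_eq_single_of_mem i hi fun j _ hji ↦ S.lie_e_f_ne j i hji,
      S.lie_e_f_same]
  refine ⟨fun h0 ↦ hE ?_, ?_, ?_, ?_⟩
  · have := lie_h_e hj
    rw [h0, zero_lie, eq_comm, ← Nat.cast_smul_eq_nsmul K, smul_eq_zero] at this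
    exact this.resolve_left (Nat.cast_ne_zero.2 two_ne_zero)
  · rw [lie_sum]
    exact Finset.sum_congr rfl fun i hi ↦ by rw [lie_zsmul, lie_e_f hi]
  · rw [lie_sum, Finset.smul_sum]
    exact Finset.sum_congr rfl fun i hi ↦ lie_h_e hi
  · rw [lie_sum, Finset.smul_sum, ← Finset.sum_neg_distrib]
    exact Finset.sum_congr rfl fun i hi ↦ by rw [lie_zsmul, lie_h_f hi, smul_neg, smul_comm]

end LeviTriple

section NestedBracket

variable {𝔤 : Type*} [LieRing 𝔤]

/-- The nested bracket `⁅F i₁, ⁅F i₂, … ⁅F iₙ₋₁, F iₙ⁆⁆⁆` of a word `[i₁, …, iₙ]`. -/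
def nestedBracket {ι : Type*} (F : ι → 𝔤) : List ι → 𝔤
  | [] => 0
  | [i] => F i
  | i :: j :: w => ⁅F i, nestedBracket F (j :: w)⁆

/-- The expansion of `⁅nestedBracket F w, φ b⁆` when `Fᵢ` maps `φ b` to the multiple of a vector
`φ c` given by `g i b`. -/
def nestedBracketTerms {ι X : Type*} (g : ι → X → ℤ × X) : List ι → X → List (ℤ × X)
  | [], _ => []
  | [i], b => [g i b]
  | i :: j :: w, b =>
    bindTerms (fun c ↦ [g i c]) (nestedBracketTerms g (j :: w) b) ++
      smulTerms (-1) (bindTerms (nestedBracketTerms g (j :: w)) [g i b])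

lemma nestedBracket_lie {ι X : Type*} {F : ι → 𝔤} {φ : X → 𝔤} {g : ι → X → ℤ × X}
    (hg : ∀ i b, ⁅F i, φ b⁆ = (g i b).1 • φ (g i b).2) (w : List ι) (b : X) :
    ⁅nestedBracket F w, φ b⁆ = evalTerms φ (nestedBracketTerms g w b) := by
  induction w generalizing b with
  | nil => simp [nestedBracket, nestedBracketTerms]
  | cons i w ih =>
    cases w with
    | nil => simp [nestedBracket, nestedBracketTerms, hg]
    | cons j w =>
      have hg' (c : X) : ⁅F i, φ c⁆ = evalTerms φ [g i c] := by simp [hg]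
      rw [nestedBracket, nestedBracketTerms, lie_lie, evalTerms_append, evalTerms_smulTerms,
        neg_one_zsmul, ← sub_eq_add_neg, ih, lie_evalTerms hg', hg', lie_evalTerms ih]

lemma evalTerms_nestedBracket_lie {ι X : Type*} {F : ι → 𝔤} {φ : X → 𝔤} {g : ι → X → ℤ × X}
    (hg : ∀ i b, ⁅F i, φ b⁆ = (g i b).1 • φ (g i b).2) (c : List (ℤ × List ι))
    (l : List (ℤ × X)) :
    ⁅evalTerms (nestedBracket F) c, evalTerms φ l⁆ =
      evalTerms φ (bindTerms (fun b ↦ bindTerms (nestedBracketTerms g · b) c) l) :=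
  lie_evalTerms (fun b ↦ evalTerms_lie (nestedBracket_lie hg · b) c) l

end NestedBracket

section F₄

open CartanMatrix Idx

variable (K : Type*) [Field K] [CharZero K]

instance : FiniteDimensional K (f₄ K) := (f₄Basis K).finiteDimensional_of_finite

lemma lie_serreE_f₄Basis (i : Fin 4) (b : Idx) :
    ⁅serreE K F₄ i, f₄Basis K b⁆ = (raise i b).1 • f₄Basis K (raise i b).2 := by
  simp only [f₄Basis_apply]
  exact isChevalleySystem_serre.lie_e_adjointVec i b

lemma lie_serreF_f₄Basis (i : Fin 4) (b : Idx) :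
    ⁅serreF K F₄ i, f₄Basis K b⁆ = (lower i b).1 • f₄Basis K (lower i b).2 := by
  simp only [f₄Basis_apply]
  exact isChevalleySystem_serre.lie_f_adjointVec i b

lemma lie_serreH_f₄Basis (i : Fin 4) (b : Idx) :
    ⁅serreH K F₄ i, f₄Basis K b⁆ = wt i b • f₄Basis K b := by
  simp only [f₄Basis_apply]
  exact isChevalleySystem_serre.lie_h_adjointVec i b

/-- The simple roots of the Levi subalgebra of type `Ã₂ + A₁`. -/
def leviNodes : Finset (Fin 4) := {0, 1, 3}

/-- The coefficients of the sum of the positive coroots of the Levi subalgebra of type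
`Ã₂ + A₁`. -/
def leviCoeff : Fin 4 → ℤ := ![2, 2, 0, 1]

/-- The regular nilpotent element of the Levi subalgebra of type `Ã₂ + A₁`. -/
noncomputable def leviE : f₄ K := ∑ i ∈ leviNodes, serreE K F₄ i

lemma isSl2Triple_leviE :
    IsSl2Triple (∑ i ∈ leviNodes, leviCoeff i • serreH K F₄ i) (leviE K)
      (∑ i ∈ leviNodes, leviCoeff i • serreF K F₄ i) :=
  isChevalleySystem_serre.isSl2Triple_sum (by decide) (by decide : 0 ∈ leviNodes)
    (serreE_f₄_ne_zero K 0)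

lemma finrank_centralizerOf_leviE_le : finrank K (centralizerOf K (leviE K)).toSubmodule ≤ 16 := by
  rw [toSubmodule_centralizerOf]
  refine (finrank_ker_e_le_card (wt := fun b ↦ ∑ i ∈ leviNodes, leviCoeff i * wt i b)
    (f₄Basis K) (isSl2Triple_leviE K) fun b ↦ ?_).trans (by decide +kernel)
  simp_rw [sum_lie, zsmul_lie, lie_serreH_f₄Basis, smul_smul, ← Finset.sum_smul,
    Int.cast_smul_eq_zsmul]

/-- The expansion of `⁅leviE, b⁆` for a basis vector `b`. -/
def leviETerms (b : Idx) : List (ℤ × Idx) := [raise 0 b, raise 1 b, raise 3 b]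

lemma lie_leviE_f₄Basis (b : Idx) :
    ⁅leviE K, f₄Basis K b⁆ = evalTerms (f₄Basis K) (leviETerms b) := by
  simp [leviE, leviNodes, leviETerms, lie_serreE_f₄Basis]

namespace Idx

/-- The root vector with root `(a, b, c, d)`; the value at other quadruples is irrelevant. -/
def ofRoot (a b c d : ℤ) : Idx :=
  if h : (a, b, c, d) ∈ posRoots then pos ⟨_, h⟩
  else if h : (-a, -b, -c, -d) ∈ posRoots then neg ⟨_, h⟩ else cartan 0

end Idx

/-- A basis of the centralizer of `leviE`. The first vector is a multiple of `E₀ + E₁`, and the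
second one is the semisimple element `2 H₀ + 4 H₁ + 6 H₂ + 3 H₃`. -/
def centTerms : Fin 16 → List (ℤ × Idx) := ![
  [(1, ofRoot 0 1 0 0), (-1, ofRoot 1 0 0 0)],
  [(-2, cartan 0), (4, cartan 1), (-6, cartan 2), (3, cartan 3)],
  [(1, ofRoot 0 0 0 1)],
  [(1, ofRoot 1 1 0 0)],
  [(1, ofRoot 2 2 2 1), (-1, ofRoot 1 3 2 1)],
  [(1, ofRoot (-2) (-2) (-2) (-1)), (-1, ofRoot (-1) (-3) (-2) (-1))],
  [(1, ofRoot 1 1 1 1), (-1, ofRoot 0 2 1 1)],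
  [(1, ofRoot (-1) (-1) (-1) 0), (-1, ofRoot 0 (-2) (-1) 0)],
  [(1, ofRoot 2 4 3 2)],
  [(1, ofRoot (-2) (-4) (-3) (-1))],
  [(2, ofRoot 2 2 1 0), (-1, ofRoot 1 2 1 1)],
  [(2, ofRoot 0 0 (-1) (-1)), (-1, ofRoot 0 (-1) (-1) 0)],
  [(1, ofRoot 2 4 2 1)],
  [(1, ofRoot 0 (-2) (-2) (-1))],
  [(1, ofRoot 2 2 1 1)],
  [(1, ofRoot 0 0 (-1) 0)]]

/-- The vectors of the centralizer of `leviE` which are described by `centTerms`. -/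
noncomputable def centVec (a : Fin 16) : f₄ K := evalTerms (f₄Basis K) (centTerms a)

lemma centVec_mem (a : Fin 16) : centVec K a ∈ centralizerOf K (leviE K) := by
  have h : ∀ a, IsNullTerms (bindTerms leviETerms (centTerms a)) := by decide +kernel
  rw [mem_centralizerOf, ← lie_skew, centVec, lie_evalTerms (lie_leviE_f₄Basis K),
    (h a).evalTerms_eq_zero, neg_zero]

lemma linearIndependent_centVec : LinearIndependent K (centVec K) := by
  have hpivot : ∀ a, ∃ x, termCoeff (centTerms a) x ≠ 0 ∧
      ∀ c ≠ a, termCoeff (centTerms c) x = 0 := by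
    decide +kernel
  refine Fintype.linearIndependent_iff.2 fun s hs a ↦ ?_
  obtain ⟨x, hax, hx⟩ := hpivot a
  have h := congrArg (fun v ↦ (f₄Basis K).repr v x) hs
  simp only [map_sum, map_smul, Finsupp.coe_finsetSum, Finset.sum_apply, Finsupp.smul_apply,
    centVec, repr_evalTerms, smul_eq_mul, map_zero, Finsupp.zero_apply] at h
  rw [Fintype.sum_eq_single a fun c hc ↦ by rw [hx c hc, Int.cast_zero, mul_zero]] at h
  exact (mul_eq_zero.1 h).resolve_right (Int.cast_ne_zero.2 hax)

lemma span_centVec :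
    Submodule.span K (Set.range (centVec K)) = (centralizerOf K (leviE K)).toSubmodule := by
  refine Submodule.eq_of_le_of_finrank_le
    (Submodule.span_le.2 (Set.range_subset_iff.2 (centVec_mem K))) ?_
  rw [finrank_span_eq_card (linearIndependent_centVec K), Fintype.card_fin]
  exact finrank_centralizerOf_leviE_le K

/-- Nonzero integers `n` and vectors `w` with `n • ⁅F₀, v⁆ = ⁅leviE, w⁆`, where `v` runs over the
basis `centVec` of the centralizer of `leviE`. -/
def lowerWitness : Fin 16 → ℤ × List (ℤ × Idx) := ![
  (1, [(-1, ofRoot (-1) 0 0 0)]),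
  (1, []),
  (1, []),
  (3, [(-1, cartan 0), (2, cartan 1)]),
  (1, [(1, ofRoot 0 2 2 1)]),
  (1, [(-1, ofRoot (-2) (-4) (-2) (-1))]),
  (1, [(1, ofRoot 0 0 1 1)]),
  (1, [(-1, ofRoot (-2) (-2) (-1) 0)]),
  (1, []),
  (1, []),
  (3, [(2, ofRoot 0 2 1 0), (-4, ofRoot 0 1 1 1), (4, ofRoot 1 1 1 0)]),
  (3, [(-2, ofRoot (-1) (-1) (-1) (-1)), (-1, ofRoot (-1) (-2) (-1) 0),
    (2, ofRoot 0 (-2) (-1) (-1))]),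
  (1, []),
  (1, [(1, ofRoot (-1) (-3) (-2) (-1))]),
  (1, [(1, ofRoot 0 2 1 1)]),
  (1, [])]

lemma lie_serreF_mem_range_ad_leviE {x : f₄ K} (hx : x ∈ centralizerOf K (leviE K)) :
    ⁅serreF K F₄ 0, x⁆ ∈ LinearMap.range (ad K _ (leviE K)) := by
  have hwitness : ∀ a, (lowerWitness a).1 ≠ 0 ∧ IsNullTerms
      (smulTerms (lowerWitness a).1 (bindTerms (fun b ↦ [lower 0 b]) (centTerms a)) ++
        smulTerms (-1) (bindTerms leviETerms (lowerWitness a).2)) := by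
    decide +kernel
  rw [← LieSubalgebra.mem_toSubmodule, ← span_centVec] at hx
  suffices Submodule.span K (Set.range (centVec K)) ≤
      (LinearMap.range (ad K _ (leviE K))).comap (ad K _ (serreF K F₄ 0)) from this hx
  refine Submodule.span_le.2 (Set.range_subset_iff.2 fun a ↦ ?_)
  obtain ⟨hn, hw⟩ := hwitness a
  have h := evalTerms_eq_of_isNullTerms hw (f₄Basis K)
  rw [evalTerms_smulTerms, ← lie_evalTerms (x := serreF K F₄ 0) (φ := f₄Basis K)
    (fun b ↦ by simp [lie_serreF_f₄Basis]), ← lie_evalTerms (lie_leviE_f₄Basis K),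
    ← Int.cast_smul_eq_zsmul K] at h
  rw [SetLike.mem_coe, Submodule.mem_comap,
    ← Submodule.smul_mem_iff _ (Int.cast_ne_zero (α := K).2 hn)]
  exact ⟨_, h.symm⟩

lemma killingForm_serreF_leviE_ne_zero : killingForm K (f₄ K) (serreF K F₄ 0) (leviE K) ≠ 0 := by
  have happly (b : Idx) : (ad K _ (serreF K F₄ 0) ∘ₗ ad K _ (leviE K)) (f₄Basis K b) =
      evalTerms (f₄Basis K) (bindTerms (fun b ↦ [lower 0 b]) (leviETerms b)) := by
    rw [LinearMap.comp_apply, ad_apply, ad_apply, lie_leviE_f₄Basis]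
    exact lie_evalTerms (fun b ↦ by simp [lie_serreF_f₄Basis]) _
  have htrace : ∑ b, termCoeff (bindTerms (fun b ↦ [lower 0 b]) (leviETerms b)) b = 36 := by
    decide +kernel
  rw [killingForm_apply_apply, LinearMap.trace_eq_matrix_trace K (f₄Basis K)]
  simp only [Matrix.trace, Matrix.diag_apply, LinearMap.toMatrix_apply, happly, repr_evalTerms]
  rw [← Int.cast_sum, htrace]
  exact Int.cast_ne_zero.2 (by decide)

lemma leviE_notMem_derivedOf : leviE K ∉ derivedOf K (centralizerOf K (leviE K)) := fun h ↦
  killingForm_serreF_leviE_ne_zero K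
    (killingForm_eq_zero_of_mem_derivedOf (fun _ ↦ lie_serreF_mem_range_ad_leviE K) h)

lemma leviE_eq_evalTerms : leviE K = evalTerms (f₄Basis K)
    [(1, ofRoot 1 0 0 0), (-1, ofRoot 0 1 0 0), (-1, ofRoot 0 0 0 1)] := by
  have h (i : Fin 4) : nodeSign i • f₄Basis K (pos (simpleRoot i)) = serreE K F₄ i := by
    rw [f₄Basis_apply, isChevalleySystem_serre.adjointVec_pos_simpleRoot, smul_smul,
      nodeSign_mul_nodeSign, one_smul]
  simp only [leviE, leviNodes, ← h]
  simp [evalTerms, nodeSign]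
  rfl

/-- The eigenvalue of the semisimple element `centVec 1`. -/
def Idx.torusWt (b : Idx) : ℤ := 2 * wt 0 b + 4 * wt 1 b + 6 * wt 2 b + 3 * wt 3 b

lemma lie_centVec_one_f₄Basis (b : Idx) :
    ⁅centVec K 1, f₄Basis K b⁆ = torusWt b • f₄Basis K b := by
  have h (i : Fin 4) : ⁅f₄Basis K (cartan i), f₄Basis K b⁆ =
      -((nodeSign i * wt i b) • f₄Basis K b) := by
    rw [f₄Basis_apply (cartan i), adjointVec_cartan, neg_lie, zsmul_lie, lie_serreH_f₄Basis,
      smul_smul]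
  simp only [centVec, centTerms, Matrix.cons_val, evalTerms_cons, evalTerms_nil, add_lie, zsmul_lie,
    zero_lie, h, nodeSign, torusWt]
  module

lemma centVec_mem_derivedOf_of_four_le {a : Fin 16} (ha : 4 ≤ a) :
    centVec K a ∈ derivedOf K (centralizerOf K (leviE K)) := by
  have h : ∀ a : Fin 16, 4 ≤ a → ∃ n ∈ [1, -1, 2, -2, 3, -3], n ≠ 0 ∧ IsNullTerms
      (bindTerms (fun b ↦ [(torusWt b, b)]) (centTerms a) ++
        smulTerms (-1) (smulTerms n (centTerms a))) := by
    decide +kernel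
  have hz (b : Idx) :
      ⁅centVec K 1, f₄Basis K b⁆ = evalTerms (f₄Basis K) [(torusWt b, b)] := by
    simp [lie_centVec_one_f₄Basis]
  obtain ⟨n, -, hn, hna⟩ := h a ha
  have hlie := lie_mem_derivedOf (centVec_mem K 1) (centVec_mem K a)
  rwa [centVec.eq_def K a, lie_evalTerms hz, evalTerms_eq_of_isNullTerms hna,
    evalTerms_smulTerms, ← Int.cast_smul_eq_zsmul K,
    Submodule.smul_mem_iff _ (Int.cast_ne_zero.2 hn)] at hlie

lemma centVec_mem_derivedOf_of_nestedBracket {a c : Fin 16} {w : List (ℤ × List (Fin 4))} {n : ℤ}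
    (hn : n ≠ 0)
    (hw : IsNullTerms (bindTerms (fun b ↦ bindTerms (nestedBracketTerms lower · b) w)
      [(1, ofRoot 1 0 0 0), (-1, ofRoot 0 1 0 0), (-1, ofRoot 0 0 0 1)]))
    (hac : IsNullTerms (bindTerms (fun b ↦ bindTerms (nestedBracketTerms lower · b) w)
      (centTerms a) ++ smulTerms (-1) (smulTerms n (centTerms c)))) :
    centVec K c ∈ derivedOf K (centralizerOf K (leviE K)) := by
  have hmem : evalTerms (nestedBracket (serreF K F₄)) w ∈ centralizerOf K (leviE K) := by
    rw [mem_centralizerOf, leviE_eq_evalTerms, evalTerms_nestedBracket_lie (lie_serreF_f₄Basis K),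
      hw.evalTerms_eq_zero]
  have hlie := lie_mem_derivedOf hmem (centVec_mem K a)
  rwa [centVec, evalTerms_nestedBracket_lie (lie_serreF_f₄Basis K),
    evalTerms_eq_of_isNullTerms hac, evalTerms_smulTerms, ← Int.cast_smul_eq_zsmul K,
    Submodule.smul_mem_iff _ (Int.cast_ne_zero.2 hn)] at hlie

lemma centVec_mem_derivedOf {a : Fin 16} (ha : a ≠ 0) :
    centVec K a ∈ derivedOf K (centralizerOf K (leviE K)) := by
  have hcases : a = 1 ∨ a = 2 ∨ a = 3 ∨ 4 ≤ a := by decide +revert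
  -- Up to multiples, these are the brackets of `centVec` at `5, 4`, at `7, 6` and at `11, 6`; the
  -- words express the first factor through the generators `Fᵢ`.
  rcases hcases with rfl | rfl | rfl | h
  · exact centVec_mem_derivedOf_of_nestedBracket K (a := 4) (c := 1) (n := 2)
      (w := [(-2, [1, 2, 1, 0, 1, 2, 3]), (1, [0, 2, 1, 0, 1, 2, 3])])
      (by decide) (by decide +kernel) (by decide +kernel)
  · exact centVec_mem_derivedOf_of_nestedBracket K (a := 6) (c := 2) (n := -6)
      (w := [(1, [1, 1, 2]), (-2, [0, 1, 2])])
      (by decide) (by decide +kernel) (by decide +kernel)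
  · exact centVec_mem_derivedOf_of_nestedBracket K (a := 6) (c := 3) (n := 2)
      (w := [(1, [1, 2]), (2, [2, 3])])
      (by decide) (by decide +kernel) (by decide +kernel)
  · exact centVec_mem_derivedOf_of_four_le K h

lemma fifteen_le_finrank_derivedOf :
    15 ≤ finrank K (derivedOf K (centralizerOf K (leviE K))) := by
  have hli := (linearIndependent_centVec K).comp _ (Fin.succ_injective 15)
  rw [← Fintype.card_fin 15, ← finrank_span_eq_card hli]
  exact Submodule.finrank_mono (Submodule.span_le.2 (Set.range_subset_iff.2 fun a ↦
    centVec_mem_derivedOf K a.succ_ne_zero))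

theorem exists_sl2Triple_f₄_general :
    ∃ e h f : LieAlgebra.f₄ K, IsSl2Triple h e f ∧
      Module.finrank K (centralizerOf K e).toSubmodule = 16 ∧
      Module.finrank K (derivedOf K (centralizerOf K e)) = 15 ∧
      e ∉ derivedOf K (centralizerOf K e) ∧
      (centralizerOf K e).toSubmodule
        = Submodule.span K {e} ⊔ derivedOf K (centralizerOf K e) ∧
      Submodule.span K {e} ⊓ derivedOf K (centralizerOf K e) = ⊥ := by
  obtain ⟨hcent, hder, hsup, hinf⟩ := eq_span_singleton_sup_of_finrank
    (derivedOf_le _) (lie_self (leviE K)) (leviE_notMem_derivedOf K)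
    (finrank_centralizerOf_leviE_le K) (fifteen_le_finrank_derivedOf K)
  exact ⟨_, _, _, isSl2Triple_leviE K, hcent, hder, leviE_notMem_derivedOf K, hsup, hinf⟩

end F₄

/-- In the simple complex Lie algebra of type F₄ there is an `sl₂`-triple `(e,h,f)`
such that `dim g_e = 16`, `dim [g_e, g_e] = 15`, `e ∉ [g_e, g_e]`, and hence `g_e` is
the direct sum of the span of `e` and `[g_e, g_e]`. -/
theorem exists_sl2Triple_f₄ :
    ∃ e h f : LieAlgebra.f₄ ℂ, IsSl2Triple h e f ∧
      Module.finrank ℂ (centralizerOf ℂ e).toSubmodule = 16 ∧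
      Module.finrank ℂ (derivedOf ℂ (centralizerOf ℂ e)) = 15 ∧
      e ∉ derivedOf ℂ (centralizerOf ℂ e) ∧
      (centralizerOf ℂ e).toSubmodule
        = Submodule.span ℂ {e} ⊔ derivedOf ℂ (centralizerOf ℂ e) ∧
      Submodule.span ℂ {e} ⊓ derivedOf ℂ (centralizerOf ℂ e) = ⊥ :=
  exists_sl2Triple_f₄_general ℂ

end PaperStmt
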